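/- arXiv:0912.2909 — 2 statements merged into one kernel-verified Lean document; each statement's English description precedes it below -/
import Mathlib

section
/- The set of eigenvalues of the first-order boundary-value problem y'(x) = (λA(x) + B(x))y(x) on [a,b] with W_a y(a) + W_b y(b) = 0 is countably infinite, i.e., the set {λ ∈ ℂ : the problem has a nonzero continuously differentiable solution} is infinite and countable. -/
open Matrix

/-- `lam` is an eigenvalue of the boundary-value problem
`y' = (lam A + B) y` on `[a,b]`, `W_a y(a) + W_b y(b) = 0`:
there is a nonzero continuously differentiable solution. -/
def IsBVPEigenvalue (a b : ℝ) (A B : ℝ → Matrix (Fin 2) (Fin 2) ℂ)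
    (Wa Wb : Matrix (Fin 2) (Fin 2) ℂ) (lam : ℂ) : Prop :=
  ∃ y y' : ℝ → (Fin 2 → ℂ),
    (∀ x ∈ Set.Icc a b, HasDerivWithinAt y (y' x) (Set.Icc a b) x) ∧
    ContinuousOn y' (Set.Icc a b) ∧
    (∃ x ∈ Set.Icc a b, y x ≠ 0) ∧
    (∀ x ∈ Set.Icc a b, y' x = (lam • A x + B x).mulVec (y x)) ∧
    Wa.mulVec (y a) + Wb.mulVec (y b) = 0

/-!
The eigenvalues are the zeros of `Δ(z) = det (W_a + W_b Y(z, b))`, where `Y(z, ·)` is the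
fundamental solution normalised at `a`; rescaling `λ` makes the leading coefficient real. The Picard
series shows that `Δ` is entire of exponential type. As `z = t → +∞` the first component dominates:
divided by its exponential rate, `Y(t, b)` tends to `E₁₁`, while Liouville's formula gives
`det Y(t, b)`, and so `Δ(t)` is of exact order `exp (t ∫ ρ₁)` with leading coefficient proportional
to `det Ω₂`.
Symmetrically `Δ(-t)` is of exact order `exp (t ∫ ρ₂)`, with `det Ω₁` in place of `det Ω₂`.
If `Δ` had only finitely many zeros, then `Δ(z) = P(z) exp (α z + c)` with `P` a polynomial, and
`Δ(t) Δ(-t) = P(t) P(-t) exp (2 c)` could not grow exponentially.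
-/

open Filter Asymptotics Topology

section EntireFunctions

open Metric Polynomial

/-- An entire function is of exponential type when `‖f z‖ ≤ C * exp (D * ‖z‖)` throughout the plane,
for some constants `C` and `D`. -/
def HasExponentialType (f : ℂ → ℂ) : Prop :=
  ∃ D : ℝ, f =O[⊤] fun z ↦ Real.exp (D * ‖z‖)

variable {f g h : ℂ → ℂ}

lemma norm_sub_zero_le_of_re_le {C : ℝ} (hh : Differentiable ℂ h) (hC : 0 < C)
    (hre : ∀ z, (h z - h 0).re ≤ C * (1 + ‖z‖)) (z : ℂ) : ‖h z - h 0‖ ≤ 4 * C * ‖z‖ := by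
  have hz := norm_nonneg z
  have hmaps : Set.MapsTo (fun w ↦ h w - h 0) (ball 0 (2 * ‖z‖ + 1))
      {w | w.re ≤ C * (2 * (1 + ‖z‖))} := fun w hw ↦ by
    have hw : ‖w‖ < 2 * ‖z‖ + 1 := mem_ball_zero_iff.1 hw
    exact (hre w).trans (by gcongr; linarith)
  have hball : z ∈ ball (0 : ℂ) (2 * ‖z‖ + 1) := mem_ball_zero_iff.2 (by linarith)
  refine (Complex.borelCaratheodory_zero (by positivity) (hh.sub_const (h 0)).differentiableOn hmaps
    (by positivity) hball (sub_self _)).trans_eq ?_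
  have hz1 : 1 + ‖z‖ ≠ 0 := by positivity
  rw [show 2 * ‖z‖ + 1 - ‖z‖ = 1 + ‖z‖ by ring]
  field_simp
  ring

lemma exists_eq_add_mul_of_norm_sub_le {K : ℝ} (hh : Differentiable ℂ h)
    (hK : ∀ z, ‖h z - h 0‖ ≤ K * ‖z‖) : ∃ c, ∀ z, h z = h 0 + c * z := by
  have hslope : Differentiable ℂ (dslope h 0) := differentiableOn_univ.1 <|
    (Complex.differentiableOn_dslope univ_mem).2 hh.differentiableOn
  have hbdd : Bornology.IsBounded (Set.range (dslope h 0)) := by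
    refine ((isBounded_closedBall (x := (0 : ℂ)) (r := K)).insert (dslope h 0 0)).subset ?_
    rintro _ ⟨z, rfl⟩
    rcases eq_or_ne z 0 with rfl | hz
    · exact Set.mem_insert _ _
    · refine Set.mem_insert_of_mem _ (mem_closedBall_zero_iff.2 ?_)
      rw [dslope_of_ne _ hz, slope_def_field, sub_zero, norm_div,
        div_le_iff₀ (norm_pos_iff.2 hz)]
      exact hK z
  refine ⟨dslope h 0 0, fun z ↦ ?_⟩
  have hfac := sub_smul_dslope h 0 z
  rw [hslope.apply_eq_apply_of_bounded hbdd z 0, sub_zero, smul_eq_mul] at hfac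
  linear_combination -hfac

lemma exists_eq_exp_of_forall_ne_zero (hf : Differentiable ℂ f) (hf0 : ∀ z, f z ≠ 0) :
    ∃ h : ℂ → ℂ, Differentiable ℂ h ∧ ∀ z, f z = Complex.exp (h z) := by
  have hlog : Differentiable ℂ fun z ↦ deriv f z / f z :=
    hf.contDiff.differentiable_deriv_two.div hf hf0
  obtain ⟨h, hh0, hh⟩ := hlog.isExactOn_univ.with_val_at 0 (Complex.log (f 0))
  replace hh : ∀ z, HasDerivAt h (deriv f z / f z) z := fun z ↦ hh z (Set.mem_univ z)
  have hquot : ∀ z, HasDerivAt (fun z ↦ f z * Complex.exp (-h z)) 0 z := fun z ↦ by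
    refine ((hf z).hasDerivAt.mul (hh z).neg.cexp).congr_deriv ?_
    field_simp [hf0 z]
    ring
  refine ⟨h, fun z ↦ (hh z).differentiableAt, fun z ↦ ?_⟩
  have hconst : f z * Complex.exp (-h z) = f 0 * Complex.exp (-h 0) :=
    is_const_of_deriv_eq_zero (fun z ↦ (hquot z).differentiableAt) (fun z ↦ (hquot z).deriv) z 0
  rw [hh0, Complex.exp_neg, Complex.exp_neg, Complex.exp_log (hf0 0),
    mul_inv_cancel₀ (hf0 0)] at hconst
  exact (mul_inv_eq_one₀ (Complex.exp_ne_zero _)).1 hconst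

lemma HasExponentialType.exists_eq_exp_affine (hexp : HasExponentialType f)
    (hf : Differentiable ℂ f) (hf0 : ∀ z, f z ≠ 0) :
    ∃ c d : ℂ, ∀ z, f z = Complex.exp (c + d * z) := by
  obtain ⟨h, hh, hfh⟩ := exists_eq_exp_of_forall_ne_zero hf hf0
  obtain ⟨D, hD⟩ := hexp
  obtain ⟨K, hK⟩ := isBigO_top.1 hD
  have hK0 : 0 < K := by
    have := (norm_pos_iff.2 (hf0 0)).trans_le (hK 0)
    simpa using this
  have hre : ∀ z, (h z - h 0).re ≤ (|Real.log K - (h 0).re| + |D| + 1) * (1 + ‖z‖) := fun z ↦ by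
    have hlog : (h z).re ≤ Real.log K + D * ‖z‖ := by
      rw [← Real.exp_le_exp, Real.exp_add, Real.exp_log hK0, ← Complex.norm_exp, ← hfh]
      simpa using hK z
    have hz := norm_nonneg z
    rw [Complex.sub_re]
    nlinarith [le_abs_self (Real.log K - (h 0).re), le_abs_self D,
      abs_nonneg (Real.log K - (h 0).re), abs_nonneg D]
  obtain ⟨d, hd⟩ := exists_eq_add_mul_of_norm_sub_le hh
    (norm_sub_zero_le_of_re_le hh (by positivity) hre)
  exact ⟨h 0, d, fun z ↦ by rw [hfh, hd]⟩

lemma exists_eq_pow_sub_mul_ne_zero (hf : Differentiable ℂ f) (hf0 : ∃ z, f z ≠ 0) (a : ℂ) :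
    ∃ (n : ℕ) (g : ℂ → ℂ), Differentiable ℂ g ∧ g a ≠ 0 ∧ ∀ z, f z = (z - a) ^ n * g z := by
  have hfan : AnalyticOnNhd ℂ f Set.univ := hf.differentiableOn.analyticOnNhd isOpen_univ
  obtain ⟨p, hp⟩ := hfan a (Set.mem_univ a)
  have hp0 : p ≠ 0 := by
    rintro rfl
    obtain ⟨z, hz⟩ := hf0
    have hf_zero : f = 0 :=
      hfan.eq_of_eventuallyEq analyticOnNhd_const hp.eventually_eq_zero
    exact hz (congrFun hf_zero z)
  have hslope : ∀ n, Differentiable ℂ ((Function.swap dslope a)^[n] f) := fun n ↦ by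
    induction n with
    | zero => exact hf
    | succ n ih =>
      rw [Function.iterate_succ_apply']
      exact differentiableOn_univ.1 <|
        (Complex.differentiableOn_dslope univ_mem).2 ih.differentiableOn
  refine ⟨p.order, (Function.swap dslope a)^[p.order] f, hslope _,
    hp.iterate_dslope_fslope_ne_zero hp0, hp.eq_pow_order_mul_iterate_dslope⟩

lemma exists_eq_polynomial_mul_of_zeros_finite (hf : Differentiable ℂ f) (hf0 : ∃ z, f z ≠ 0)
    (hfin : {z | f z = 0}.Finite) :
    ∃ (P : ℂ[X]) (g : ℂ → ℂ), P ≠ 0 ∧ Differentiable ℂ g ∧ (∀ z, g z ≠ 0) ∧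
      ∀ z, f z = P.eval z * g z := by
  obtain ⟨s, hs⟩ : ∃ s : Finset ℂ, ∀ z, f z = 0 → z ∈ s := ⟨hfin.toFinset, by simp⟩
  clear hfin
  induction s using Finset.induction_on generalizing f with
  | empty => exact ⟨1, f, one_ne_zero, hf, fun z hz ↦ by simpa using hs z hz, by simp⟩
  | insert a s _ ih =>
    obtain ⟨n, g, hg, hga, hfg⟩ := exists_eq_pow_sub_mul_ne_zero hf hf0 a
    have hgs : ∀ z, g z = 0 → z ∈ s := fun z hz ↦
      Finset.mem_of_mem_insert_of_ne (hs z (by rw [hfg, hz, mul_zero]))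
        (by rintro rfl; exact hga hz)
    obtain ⟨P, k, hP, hk, hk0, hgk⟩ := ih hg ⟨a, hga⟩ hgs
    refine ⟨(X - C a) ^ n * P, k, mul_ne_zero (pow_ne_zero _ (X_sub_C_ne_zero a)) hP, hk, hk0,
      fun z ↦ ?_⟩
    simp [hfg, hgk, mul_assoc]

lemma isBigO_cocompact_polynomial_mul {P : ℂ[X]} (hP : P ≠ 0) :
    g =O[cocompact ℂ] fun z ↦ P.eval z * g z := by
  obtain ⟨c, hc, hPc⟩ : ∃ c > 0, ∀ᶠ z in cocompact ℂ, c ≤ ‖P.eval z‖ := by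
    rcases Nat.eq_zero_or_pos P.natDegree with hdeg | hdeg
    · rw [eq_C_of_natDegree_eq_zero hdeg] at hP ⊢
      exact ⟨_, norm_pos_iff.2 (C_ne_zero.1 hP), by simp⟩
    · exact ⟨1, one_pos, (P.tendsto_norm_atTop (natDegree_pos_iff_degree_pos.1 hdeg)
        (tendsto_norm_cocompact_atTop (E := ℂ))).eventually_ge_atTop 1⟩
  refine IsBigO.of_bound c⁻¹ (hPc.mono fun z hz ↦ ?_)
  rw [norm_mul, inv_mul_eq_div, le_div_iff₀ hc, mul_comm]
  gcongr

lemma HasExponentialType.of_polynomial_mul {P : ℂ[X]} (hP : P ≠ 0) (hg : Continuous g)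
    (h : HasExponentialType fun z ↦ P.eval z * g z) : HasExponentialType g := by
  obtain ⟨D, hD⟩ := h
  refine ⟨|D|, ?_⟩
  have hD' : g =O[cocompact ℂ] fun z ↦ Real.exp (|D| * ‖z‖) :=
    (isBigO_cocompact_polynomial_mul hP).trans <| (hD.mono le_top).trans <| .of_norm_le fun z ↦ by
      rw [Real.norm_eq_abs, Real.abs_exp]
      gcongr
      exact le_abs_self D
  obtain ⟨c, hc⟩ := hD'.bound
  obtain ⟨t, ht, htc⟩ := mem_cocompact.1 hc
  obtain ⟨c', hc'⟩ := ht.exists_bound_of_continuousOn hg.continuousOn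
  refine isBigO_top.2 ⟨max c c', fun z ↦ ?_⟩
  have hexp : 1 ≤ Real.exp (|D| * ‖z‖) := Real.one_le_exp (by positivity)
  rw [Real.norm_eq_abs, Real.abs_exp]
  by_cases hz : z ∈ t
  · have hz' := hc' z hz
    have hc'0 : 0 ≤ c' := (norm_nonneg _).trans hz'
    calc ‖g z‖ ≤ c' * 1 := by simpa using hz'
      _ ≤ max c c' * Real.exp (|D| * ‖z‖) := by gcongr; exact le_max_right _ _
  · have hz' : ‖g z‖ ≤ c * ‖Real.exp (|D| * ‖z‖)‖ := htc hz
    rw [Real.norm_eq_abs, Real.abs_exp] at hz'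
    exact hz'.trans (by gcongr; exact le_max_left _ _)

lemma polynomial_isLittleO_exp (P : ℂ[X]) {δ : ℝ} (hδ : 0 < δ) :
    (fun t : ℝ ↦ P.eval (t : ℂ)) =o[atTop] fun t ↦ Real.exp (δ * t) := by
  simp only [eval_eq_sum_range]
  refine IsLittleO.fun_sum fun i _ ↦ IsLittleO.const_mul_left (IsLittleO.of_norm_left ?_) _
  simpa [norm_pow] using (isLittleO_pow_exp_pos_mul_atTop i hδ).norm_left

theorem zeros_infinite_of_exp_isBigO_mul_neg {δ : ℝ} (hf : Differentiable ℂ f)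
    (hexp : HasExponentialType f) (hδ : 0 < δ)
    (hgrow : (fun t : ℝ ↦ Real.exp (δ * t)) =O[atTop] fun t : ℝ ↦ f t * f (-t)) :
    {z | f z = 0}.Infinite := by
  intro hfin
  have hf0 : ∃ z, f z ≠ 0 := by
    by_contra! h0
    exact Set.infinite_univ (hfin.subset fun z _ ↦ h0 z)
  obtain ⟨P, g, hP, hg, hg0, hfg⟩ := exists_eq_polynomial_mul_of_zeros_finite hf hf0 hfin
  have hgexp : HasExponentialType g := .of_polynomial_mul hP hg.continuous (by simpa only [← hfg])
  obtain ⟨c, d, hcd⟩ := hgexp.exists_eq_exp_affine hg hg0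
  have hprod : ∀ z, f z * f (-z) = (P * P.comp (-X) * C (Complex.exp (2 * c))).eval z := fun z ↦ by
    have hcancel : Complex.exp (c + d * z) * Complex.exp (c + d * -z) = Complex.exp (2 * c) := by
      rw [← Complex.exp_add]
      ring_nf
    simp only [hfg, hcd, eval_mul, eval_comp, eval_neg, eval_X, eval_C, ← hcancel]
    ring
  simp only [hprod] at hgrow
  exact isLittleO_irrefl (Frequently.of_forall fun t ↦ (Real.exp_pos (δ * t)).ne')
    (hgrow.trans_isLittleO (polynomial_isLittleO_exp _ hδ))

theorem zeros_countable (hf : Differentiable ℂ f) (hf0 : ∃ z, f z ≠ 0) :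
    {z | f z = 0}.Countable := by
  obtain ⟨z, hz⟩ := hf0
  have hcodisc : (f ⁻¹' {0})ᶜ ∈ codiscrete ℂ :=
    (hf.differentiableOn.analyticOnNhd isOpen_univ).preimage_zero_mem_codiscrete hz
  exact (HereditarilyLindelofSpace.isLindelof (f ⁻¹' {0})).countable_of_isDiscrete
    (by simpa using isDiscrete_of_codiscreteWithin hcodisc)

end EntireFunctions

section LinearODE

open Metric MeasureTheory

lemma differentiable_intervalIntegral {E : Type*} [NormedAddCommGroup E] [NormedSpace ℂ E]
    [CompleteSpace E] {f : ℂ → ℝ → E} (hcont : Continuous f.uncurry)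
    (hdiff : ∀ t, Differentiable ℂ fun z ↦ f z t) (a b : ℝ) :
    Differentiable ℂ fun z ↦ ∫ t in a..b, f z t := by
  intro z₀
  obtain ⟨C, hC⟩ := ((isCompact_closedBall z₀ 2).prod (isCompact_uIcc (a := a) (b := b))
    ).exists_bound_of_continuousOn hcont.continuousOn
  have hcauchy : ∀ t ∈ Set.uIoc a b, ∀ z ∈ ball z₀ 1, ‖deriv (fun w ↦ f w t) z‖ ≤ C :=
    fun t ht z hz ↦ by
      refine (Complex.norm_deriv_le_of_forall_mem_sphere_norm_le one_pos
        (hdiff t).diffContOnCl fun w hw ↦ ?_).trans_eq (div_one C)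
      refine hC (w, t) ⟨mem_closedBall.2 ?_, Set.uIoc_subset_uIcc ht⟩
      linarith [dist_triangle w z z₀, mem_sphere.1 hw, mem_ball.1 hz]
  have hmeas : StronglyMeasurable fun t ↦ deriv (fun w ↦ f w t) z₀ :=
    (stronglyMeasurable_deriv_with_param (f := fun t w ↦ f w t)
      (hcont.comp continuous_swap)).comp_measurable (measurable_id.prodMk measurable_const)
  have hslice : ∀ z, Continuous (f z) := fun z ↦ hcont.uncurry_left z
  exact (intervalIntegral.hasDerivAt_integral_of_dominated_loc_of_deriv_le
    (ball_mem_nhds z₀ one_pos) (.of_forall fun z ↦ (hslice z).aestronglyMeasurable)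
    ((hslice z₀).intervalIntegrable a b) hmeas.aestronglyMeasurable (.of_forall hcauchy)
    intervalIntegrable_const
    (.of_forall fun t _ z _ ↦ (hdiff t z).hasDerivAt)).2.differentiableAt

section Picard

variable {𝔸 : Type*} [NormedRing 𝔸] [NormedAlgebra ℝ 𝔸] {a : ℝ} {M : ℝ → 𝔸}

/-- The `n`-th term of the Picard (Dyson) series of the linear equation `Y' = M Y`, `Y a = 1`. -/
noncomputable def picardTerm (a : ℝ) (M : ℝ → 𝔸) : ℕ → ℝ → 𝔸
  | 0 => fun _ ↦ 1
  | n + 1 => fun x ↦ ∫ t in a..x, M t * picardTerm a M n t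

/-- The solution of `Y' = M Y`, `Y a = 1`, given as the sum of its Picard series. -/
noncomputable def fundamentalSolution (a : ℝ) (M : ℝ → 𝔸) (x : ℝ) : 𝔸 :=
  ∑' n, picardTerm a M n x

lemma continuous_picardTerm_param {X : Type*} [TopologicalSpace X] [FirstCountableTopology X]
    {M : X → ℝ → 𝔸} (hM : Continuous M.uncurry) (n : ℕ) :
    Continuous fun p : X × ℝ ↦ picardTerm a (M p.1) n p.2 := by
  induction n with
  | zero => exact continuous_const
  | succ n ih =>
    exact intervalIntegral.continuous_parametric_primitive_of_continuous
      (f := fun l t ↦ M l t * picardTerm a (M l) n t) (hM.mul ih)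

lemma continuous_picardTerm (hM : Continuous M) (n : ℕ) : Continuous (picardTerm a M n) :=
  (continuous_picardTerm_param (X := Unit) (M := fun _ ↦ M) (hM.comp continuous_snd) n).comp
    (continuous_const.prodMk continuous_id : Continuous fun x : ℝ ↦ ((), x))

lemma norm_picardTerm_le {K r x : ℝ} (hM : Continuous M) (hK : ∀ t, |t - a| ≤ r → ‖M t‖ ≤ K)
    (hx : |x - a| ≤ r) (n : ℕ) :
    ‖picardTerm a M n x‖ ≤ ‖(1 : 𝔸)‖ * ((K * |x - a|) ^ n / n.factorial) := by
  have hK0 : 0 ≤ K := (norm_nonneg _).trans (hK x hx)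
  induction n generalizing x with
  | zero => simp [picardTerm]
  | succ n ih =>
    have hint : Continuous fun t ↦ M t * picardTerm a M n t := hM.mul (continuous_picardTerm hM n)
    have hle : ∀ t ∈ Set.uIoc a x, ‖M t * picardTerm a M n t‖ ≤
        ‖(1 : 𝔸)‖ * (K ^ (n + 1) / n.factorial) * |t - a| ^ n := fun t ht ↦ by
      have htr : |t - a| ≤ r :=
        (Set.abs_sub_left_of_mem_uIcc (Set.uIoc_subset_uIcc ht)).trans hx
      calc ‖M t * picardTerm a M n t‖
          ≤ K * (‖(1 : 𝔸)‖ * ((K * |t - a|) ^ n / n.factorial)) :=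
            (norm_mul_le _ _).trans (mul_le_mul (hK t htr) (ih htr) (norm_nonneg _) hK0)
        _ = _ := by ring
    calc ‖picardTerm a M (n + 1) x‖
        ≤ ∫ t in Set.uIoc a x, ‖M t * picardTerm a M n t‖ :=
          intervalIntegral.norm_integral_le_integral_norm_uIoc
      _ ≤ ∫ t in Set.uIoc a x, ‖(1 : 𝔸)‖ * (K ^ (n + 1) / n.factorial) * |t - a| ^ n :=
          setIntegral_mono_on (hint.norm.intervalIntegrable a x).def'
            ((by fun_prop : Continuous fun t ↦ ‖(1 : 𝔸)‖ * (K ^ (n + 1) / n.factorial) *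
              |t - a| ^ n).intervalIntegrable a x).def' measurableSet_uIoc hle
      _ = ‖(1 : 𝔸)‖ * ((K * |x - a|) ^ (n + 1) / (n + 1).factorial) := by
          rw [integral_const_mul, integral_pow_abs_sub_uIoc, Nat.factorial_succ,
            mul_pow K]
          push_cast
          field_simp

lemma fundamentalSolution_self (a : ℝ) (M : ℝ → 𝔸) : fundamentalSolution a M a = 1 := by
  refine tsum_eq_single 0 fun n hn ↦ ?_
  obtain ⟨m, rfl⟩ := Nat.exists_eq_succ_of_ne_zero hn
  exact intervalIntegral.integral_same

lemma norm_fundamentalSolution_le {K x : ℝ} (hM : Continuous M)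
    (hK : ∀ t, |t - a| ≤ |x - a| → ‖M t‖ ≤ K) :
    ‖fundamentalSolution a M x‖ ≤ ‖(1 : 𝔸)‖ * Real.exp (K * |x - a|) := by
  rw [Real.exp_eq_exp_ℝ, NormedSpace.exp_eq_tsum_div]
  exact tsum_of_norm_bounded ((Real.summable_pow_div_factorial _).hasSum.mul_left _)
    (norm_picardTerm_le hM hK le_rfl)

variable [CompleteSpace 𝔸]

lemma hasDerivAt_picardTerm_succ (hM : Continuous M) (n : ℕ) (x : ℝ) :
    HasDerivAt (picardTerm a M (n + 1)) (M x * picardTerm a M n x) x := by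
  have hint : Continuous fun t ↦ M t * picardTerm a M n t := hM.mul (continuous_picardTerm hM n)
  exact intervalIntegral.integral_hasDerivAt_right (hint.intervalIntegrable a x)
    (hint.stronglyMeasurableAtFilter _ _) hint.continuousAt

lemma summable_picardTerm (hM : Continuous M) (x : ℝ) : Summable fun n ↦ picardTerm a M n x := by
  obtain ⟨K, hK⟩ := (isCompact_closedBall a |x - a|).exists_bound_of_continuousOn hM.continuousOn
  exact .of_norm_bounded ((Real.summable_pow_div_factorial _).mul_left _)
    fun n ↦ norm_picardTerm_le hM hK le_rfl n

lemma fundamentalSolution_eq_one_add_tsum (hM : Continuous M) (x : ℝ) :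
    fundamentalSolution a M x = 1 + ∑' n, picardTerm a M (n + 1) x :=
  (summable_picardTerm hM x).tsum_eq_zero_add

lemma hasDerivAt_fundamentalSolution (hM : Continuous M) (x : ℝ) :
    HasDerivAt (fundamentalSolution a M) (M x * fundamentalSolution a M x) x := by
  set r := |x - a| + 1
  have hr0 : 0 < r := by positivity
  obtain ⟨K, hK⟩ := (isCompact_closedBall a r).exists_bound_of_continuousOn hM.continuousOn
  have hbound : ∀ n, ∀ y ∈ ball a r, ‖M y * picardTerm a M n y‖ ≤
      K * (‖(1 : 𝔸)‖ * ((K * r) ^ n / n.factorial)) := fun n y hy ↦ by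
    have hyr : |y - a| ≤ r := (mem_ball.1 hy).le
    have hK0 : 0 ≤ K := (norm_nonneg _).trans (hK y hyr)
    refine (norm_mul_le _ _).trans (mul_le_mul (hK y hyr)
      ((norm_picardTerm_le hM hK hyr n).trans ?_) (norm_nonneg _) hK0)
    gcongr
  have hsum := hasDerivAt_tsum_of_isPreconnected
    (((Real.summable_pow_div_factorial (K * r)).mul_left ‖(1 : 𝔸)‖).mul_left K) isOpen_ball
    (convex_ball a r).isPreconnected (fun n y _ ↦ hasDerivAt_picardTerm_succ hM n y) hbound
    (mem_ball_self hr0) ((summable_nat_add_iff 1).2 (summable_picardTerm hM a))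
    (show x ∈ ball a r by rw [mem_ball, Real.dist_eq]; linarith)
  rw [(summable_picardTerm hM x).tsum_mul_left] at hsum
  exact (hsum.const_add 1).congr_of_eventuallyEq
    (.of_forall (fundamentalSolution_eq_one_add_tsum hM))

end Picard

variable {𝔸 : Type*} [NormedRing 𝔸] [NormedAlgebra ℂ 𝔸] [CompleteSpace 𝔸] {a : ℝ} {M : ℂ → ℝ → 𝔸}

lemma differentiable_picardTerm (hM : Continuous M.uncurry)
    (hdiff : ∀ t, Differentiable ℂ fun z ↦ M z t) (n : ℕ) (x : ℝ) :
    Differentiable ℂ fun z ↦ picardTerm a (M z) n x := by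
  induction n generalizing x with
  | zero => exact differentiable_const 1
  | succ n ih =>
    exact differentiable_intervalIntegral (f := fun z t ↦ M z t * picardTerm a (M z) n t)
      (hM.mul (continuous_picardTerm_param hM n)) (fun t ↦ (hdiff t).mul (ih t)) a x

lemma differentiable_fundamentalSolution (hM : Continuous M.uncurry)
    (hdiff : ∀ t, Differentiable ℂ fun z ↦ M z t) (x : ℝ) :
    Differentiable ℂ fun z ↦ fundamentalSolution a (M z) x := by
  intro z₀
  obtain ⟨K, hK⟩ := ((isCompact_closedBall z₀ 1).prod
    (isCompact_closedBall a |x - a|)).exists_bound_of_continuousOn hM.continuousOn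
  refine (Complex.differentiableOn_tsum_of_summable_norm
    ((Real.summable_pow_div_factorial (K * |x - a|)).mul_left ‖(1 : 𝔸)‖)
    (fun n ↦ (differentiable_picardTerm hM hdiff n x).differentiableOn) isOpen_ball
    fun n z hz ↦ ?_).differentiableAt (ball_mem_nhds z₀ one_pos)
  exact norm_picardTerm_le (hM.uncurry_left z)
    (fun t ht ↦ hK (z, t) ⟨ball_subset_closedBall hz, ht⟩) le_rfl n

end LinearODE

section SlowFast

open MeasureTheory Set
open scoped RealInnerProductSpace

variable {E F : Type*} [NormedAddCommGroup E] [InnerProductSpace ℝ E] [NormedAddCommGroup F]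
  [InnerProductSpace ℝ F]

lemma le_gronwallBound_of_hasDerivAt {f f' : ℝ → ℝ} {δ K ε a b : ℝ}
    (hf : ∀ x ∈ Icc a b, HasDerivAt f (f' x) x) (ha : f a ≤ δ)
    (hbound : ∀ x ∈ Icc a b, f' x ≤ K * f x + ε) :
    ∀ x ∈ Icc a b, f x ≤ gronwallBound δ K ε (x - a) :=
  le_gronwallBound_of_liminf_deriv_right_le
    (fun x hx ↦ (hf x hx).continuousAt.continuousWithinAt)
    (fun x hx _ hr ↦
      (hf x (Ico_subset_Icc_self hx)).hasDerivWithinAt.liminf_right_slope_le hr)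
    ha fun x hx ↦ hbound x (Ico_subset_Icc_self hx)

/-- A pair of coupled components on `[a, b]`: the slow component `u` is driven by the fast component
`v` alone, with strength `M`, while `v` is damped at rate `N` up to the same coupling strength. -/
structure IsSlowFastSystem (a b M N : ℝ) (u u' : ℝ → E) (v v' : ℝ → F) : Prop where
  hasDerivAt_slow : ∀ x ∈ Icc a b, HasDerivAt u (u' x) x
  hasDerivAt_fast : ∀ x ∈ Icc a b, HasDerivAt v (v' x) x
  norm_slow_le : ∀ x ∈ Icc a b, ‖u' x‖ ≤ M * ‖v x‖
  inner_fast_le : ∀ x ∈ Icc a b, ⟪v x, v' x⟫ ≤ M * ‖u x‖ * ‖v x‖ - N * ‖v x‖ ^ 2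

namespace IsSlowFastSystem

variable {a b M N : ℝ} {u u' : ℝ → E} {v v' : ℝ → F}

lemma energy_le (h : IsSlowFastSystem a b M N u u' v v') (hM : 0 ≤ M) (hN : 0 ≤ N) :
    ∀ x ∈ Icc a b, ‖u x‖ ^ 2 + ‖v x‖ ^ 2 ≤
      (‖u a‖ ^ 2 + ‖v a‖ ^ 2) * Real.exp (2 * M * (x - a)) := by
  simp only [← gronwallBound_ε0]
  refine le_gronwallBound_of_hasDerivAt (f := fun x ↦ ‖u x‖ ^ 2 + ‖v x‖ ^ 2)
    (fun x hx ↦ (h.hasDerivAt_slow x hx).norm_sq.add (h.hasDerivAt_fast x hx).norm_sq)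
    le_rfl fun x hx ↦ ?_
  have hslow : ⟪u x, u' x⟫ ≤ ‖u x‖ * (M * ‖v x‖) := (real_inner_le_norm _ _).trans
    (mul_le_mul_of_nonneg_left (h.norm_slow_le x hx) (norm_nonneg _))
  have hamgm : 0 ≤ M * (‖u x‖ - ‖v x‖) ^ 2 := by positivity
  have hdamp : 0 ≤ N * ‖v x‖ ^ 2 := by positivity
  linarith [h.inner_fast_le x hx]

lemma norm_fast_sq_le {S : ℝ} (h : IsSlowFastSystem a b M N u u' v v') (hM : 0 ≤ M) (hN : 0 < N)
    (hS : ∀ x ∈ Icc a b, ‖u x‖ ≤ S) :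
    ∀ x ∈ Icc a b, ‖v x‖ ^ 2 ≤ ‖v a‖ ^ 2 * Real.exp (-N * (x - a)) + (M * S / N) ^ 2 := by
  intro x hx
  have hgron := le_gronwallBound_of_hasDerivAt (f := fun x ↦ ‖v x‖ ^ 2) (K := -N)
    (ε := (M * S) ^ 2 / N) (fun x hx ↦ (h.hasDerivAt_fast x hx).norm_sq) le_rfl
    (fun x hx ↦ ?_) x hx
  · rw [gronwallBound_of_K_ne_0 (neg_ne_zero.2 hN.ne')] at hgron
    have hrest : 0 ≤ (M * S / N) ^ 2 * Real.exp (-N * (x - a)) := by positivity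
    have hsplit : (M * S) ^ 2 / N / -N * (Real.exp (-N * (x - a)) - 1) =
        (M * S / N) ^ 2 - (M * S / N) ^ 2 * Real.exp (-N * (x - a)) := by
      field_simp
      ring
    linarith
  · have hcoupling : M * ‖u x‖ * ‖v x‖ ≤ M * S * ‖v x‖ := by
      gcongr
      exact hS x hx
    have hamgm : 0 ≤ N * (‖v x‖ - M * S / N) ^ 2 := by positivity
    have hexpand : N * (‖v x‖ - M * S / N) ^ 2 =
        N * ‖v x‖ ^ 2 - 2 * (M * S * ‖v x‖) + (M * S) ^ 2 / N := by
      field_simp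
      ring
    linarith [h.inner_fast_le x hx]

lemma continuousOn_fast (h : IsSlowFastSystem a b M N u u' v v') : ContinuousOn v (Icc a b) :=
  fun x hx ↦ (h.hasDerivAt_fast x hx).continuousAt.continuousWithinAt

lemma norm_slow_sub_le (h : IsSlowFastSystem a b M N u u' v v') (hab : a ≤ b) :
    ‖u b - u a‖ ≤ M * ∫ x in a..b, ‖v x‖ := by
  rw [← intervalIntegral.integral_const_mul]
  refine norm_sub_le_integral_of_norm_deriv_le_of_le hab
    (fun x hx ↦ (h.hasDerivAt_slow x hx).continuousAt.continuousWithinAt)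
    (fun x hx ↦
      (h.hasDerivAt_slow x (Ioo_subset_Icc_self hx)).differentiableAt.differentiableWithinAt)
    (.of_forall fun x hx ↦ ?_)
    ((h.continuousOn_fast.norm.const_mul M).intervalIntegrable_of_Icc hab)
  rw [(h.hasDerivAt_slow x (Ioo_subset_Icc_self hx)).deriv]
  exact h.norm_slow_le x (Ioo_subset_Icc_self hx)

end IsSlowFastSystem

section Limit

variable {ι : Type*} {l : Filter ι} {a b M E₀ : ℝ} {N : ι → ℝ} {u u' : ι → ℝ → E} {v v' : ι → ℝ → F}

lemma eventually_slowFast_energy_le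
    (hsys : ∀ᶠ t in l, IsSlowFastSystem a b M (N t) (u t) (u' t) (v t) (v' t))
    (hM : 0 ≤ M) (hN : Tendsto N l atTop) (hE₀ : ∀ t, ‖u t a‖ ^ 2 + ‖v t a‖ ^ 2 ≤ E₀) :
    ∀ᶠ t in l, ∀ x ∈ Icc a b,
      ‖u t x‖ ^ 2 + ‖v t x‖ ^ 2 ≤ E₀ * Real.exp (2 * M * (b - a)) := by
  filter_upwards [hsys, hN.eventually_ge_atTop 0] with t h ht x hx
  have hxb := hx.2
  have hE₀0 : 0 ≤ E₀ := (by positivity : (0 : ℝ) ≤ _).trans (hE₀ t)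
  refine (h.energy_le hM ht x hx).trans ?_
  gcongr
  exact hE₀ t

theorem tendsto_fast_zero (hsys : ∀ᶠ t in l, IsSlowFastSystem a b M (N t) (u t) (u' t) (v t) (v' t))
    (hM : 0 ≤ M) (hN : Tendsto N l atTop) (hE₀ : ∀ t, ‖u t a‖ ^ 2 + ‖v t a‖ ^ 2 ≤ E₀) {x : ℝ}
    (hx : x ∈ Ioc a b) : Tendsto (fun t ↦ v t x) l (𝓝 0) := by
  set S := √(E₀ * Real.exp (2 * M * (b - a)))
  have hdecay : Tendsto (fun t ↦ E₀ * Real.exp (-N t * (x - a)) + (M * S / N t) ^ 2) l (𝓝 0) := by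
    have hexp : Tendsto (fun t ↦ Real.exp (-N t * (x - a))) l (𝓝 0) :=
      Real.tendsto_exp_atBot.comp
        ((tendsto_neg_atTop_atBot.comp hN).atBot_mul_const (sub_pos.2 hx.1))
    simpa using (hexp.const_mul E₀).add ((hN.const_div_atTop (M * S)).pow 2)
  have hsq : Tendsto (fun t ↦ ‖v t x‖ ^ 2) l (𝓝 0) := by
    refine squeeze_zero' (.of_forall fun t ↦ sq_nonneg _) ?_ hdecay
    filter_upwards [hsys, eventually_slowFast_energy_le hsys hM hN hE₀, hN.eventually_gt_atTop 0]
      with t h henergy ht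
    have hS : ∀ y ∈ Icc a b, ‖u t y‖ ≤ S := fun y hy ↦
      Real.le_sqrt_of_sq_le (by linarith [henergy y hy, sq_nonneg ‖v t y‖])
    refine (h.norm_fast_sq_le hM ht hS x (Ioc_subset_Icc_self hx)).trans ?_
    gcongr
    linarith [hE₀ t, sq_nonneg ‖u t a‖]
  rw [tendsto_zero_iff_norm_tendsto_zero]
  simpa using hsq.sqrt

theorem tendsto_slow_sub_zero [l.IsCountablyGenerated]
    (hsys : ∀ᶠ t in l, IsSlowFastSystem a b M (N t) (u t) (u' t) (v t) (v' t))
    (hM : 0 ≤ M) (hN : Tendsto N l atTop) (hE₀ : ∀ t, ‖u t a‖ ^ 2 + ‖v t a‖ ^ 2 ≤ E₀)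
    (hab : a ≤ b) : Tendsto (fun t ↦ u t b - u t a) l (𝓝 0) := by
  have hint : Tendsto (fun t ↦ ∫ x in a..b, ‖v t x‖) l (𝓝 (∫ _ in a..b, 0)) := by
    refine intervalIntegral.tendsto_integral_filter_of_dominated_convergence
      (fun _ ↦ √(E₀ * Real.exp (2 * M * (b - a)))) ?_ ?_ intervalIntegrable_const ?_
    · exact hsys.mono fun t h ↦
        (h.continuousOn_fast.norm.intervalIntegrable_of_Icc hab).def'.aestronglyMeasurable
    · filter_upwards [eventually_slowFast_energy_le hsys hM hN hE₀] with t henergy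
      refine .of_forall fun x hx ↦ ?_
      rw [uIoc_of_le hab] at hx
      rw [norm_norm]
      exact Real.le_sqrt_of_sq_le
        (by linarith [henergy x (Ioc_subset_Icc_self hx), sq_nonneg ‖u t x‖])
    · refine .of_forall fun x hx ↦ ?_
      rw [uIoc_of_le hab] at hx
      simpa using (tendsto_fast_zero hsys hM hN hE₀ hx).norm
  refine squeeze_zero_norm' (hsys.mono fun t h ↦ h.norm_slow_sub_le hab) ?_
  simpa using hint.const_mul M

end Limit

end SlowFast

section ScalarLinear

open MeasureTheory Set
open scoped RealInnerProductSpace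

variable {a b : ℝ} {α β γ δ U V : ℝ → ℂ}

lemma hasDerivAt_cexp_neg_integral (hα : Continuous α) (a x : ℝ) :
    HasDerivAt (fun x ↦ Complex.exp (-∫ t in a..x, α t))
      (-α x * Complex.exp (-∫ t in a..x, α t)) x := by
  rw [mul_comm]
  exact (intervalIntegral.integral_hasDerivAt_right (hα.intervalIntegrable a x)
    (hα.stronglyMeasurableAtFilter _ _) hα.continuousAt).neg.cexp

lemma eq_mul_cexp_integral_of_hasDerivAt (hα : Continuous α)
    (hU : ∀ x, HasDerivAt U (α x * U x) x) (a x : ℝ) :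
    U x = U a * Complex.exp (∫ t in a..x, α t) := by
  have hquot : ∀ y, HasDerivAt (fun y ↦ U y * Complex.exp (-∫ t in a..y, α t)) 0 y := fun y ↦
    ((hU y).mul (hasDerivAt_cexp_neg_integral hα a y)).congr_deriv (by ring)
  have hconst := is_const_of_deriv_eq_zero (fun y ↦ (hquot y).differentiableAt)
    (fun y ↦ (hquot y).deriv) x a
  simp only [intervalIntegral.integral_same, neg_zero, Complex.exp_zero, mul_one] at hconst
  rw [← hconst, mul_assoc, ← Complex.exp_add, neg_add_cancel, Complex.exp_zero, mul_one]

lemma isSlowFastSystem_of_linear {M N : ℝ} (hα : Continuous α)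
    (hU : ∀ x, HasDerivAt U (α x * U x + β x * V x) x)
    (hV : ∀ x, HasDerivAt V (γ x * U x + δ x * V x) x)
    (hβ : ∀ x ∈ Icc a b, ‖β x‖ ≤ M) (hγ : ∀ x ∈ Icc a b, ‖γ x‖ ≤ M)
    (hδ : ∀ x ∈ Icc a b, (δ x - α x).re ≤ -N) :
    IsSlowFastSystem a b M N (fun x ↦ Complex.exp (-∫ t in a..x, α t) * U x)
      (fun x ↦ β x * (Complex.exp (-∫ t in a..x, α t) * V x))
      (fun x ↦ Complex.exp (-∫ t in a..x, α t) * V x)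
      (fun x ↦ γ x * (Complex.exp (-∫ t in a..x, α t) * U x) +
        (δ x - α x) * (Complex.exp (-∫ t in a..x, α t) * V x)) where
  hasDerivAt_slow x _ :=
    ((hasDerivAt_cexp_neg_integral hα a x).mul (hU x)).congr_deriv (by ring)
  hasDerivAt_fast x _ :=
    ((hasDerivAt_cexp_neg_integral hα a x).mul (hV x)).congr_deriv (by ring)
  norm_slow_le x hx := by
    rw [norm_mul]
    exact mul_le_mul_of_nonneg_right (hβ x hx) (norm_nonneg _)
  inner_fast_le x hx := by
    set u := Complex.exp (-∫ t in a..x, α t) * U x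
    set v := Complex.exp (-∫ t in a..x, α t) * V x
    have hdamp : ⟪v, (δ x - α x) * v⟫ = (δ x - α x).re * ‖v‖ ^ 2 := by
      rw [Complex.inner, mul_assoc, Complex.mul_conj, Complex.re_mul_ofReal,
        Complex.normSq_eq_norm_sq]
    have hcouple : ⟪v, γ x * u⟫ ≤ M * ‖u‖ * ‖v‖ :=
      calc ⟪v, γ x * u⟫ ≤ ‖v‖ * (‖γ x‖ * ‖u‖) := norm_mul (γ x) u ▸ real_inner_le_norm _ _
        _ ≤ ‖v‖ * (M * ‖u‖) := by gcongr; exact hγ x hx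
        _ = M * ‖u‖ * ‖v‖ := by ring
    rw [inner_add_right, hdamp]
    nlinarith [hδ x hx, sq_nonneg ‖v‖]

lemma tendsto_cexp_mul_add_zero {c : ℝ} (hc : c < 0) (k : ℂ) :
    Tendsto (fun t : ℝ ↦ Complex.exp (t * c + k)) atTop (𝓝 0) := by
  rw [tendsto_zero_iff_norm_tendsto_zero]
  simp only [Complex.norm_exp, Complex.add_re, ← Complex.ofReal_mul, Complex.ofReal_re]
  exact Real.tendsto_exp_atBot.comp
    (tendsto_atBot_add_const_right _ _ (tendsto_id.atTop_mul_const_of_neg hc))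

end ScalarLinear

section MatrixIdentities

lemma sum_eq_add_of_ne {M : Type*} [AddCommMonoid M] (f : Fin 2 → M) {i j : Fin 2} (hij : i ≠ j) :
    ∑ k, f k = f i + f j := by
  have huniv : Finset.univ = {i, j} := by decide +revert
  rw [huniv, Finset.sum_pair hij]

lemma diagonal_vec_one_zero {R : Type*} [Zero R] [One R] :
    diagonal ![1, 0] = single (0 : Fin 2) 0 (1 : R) := by
  ext k m
  fin_cases k <;> fin_cases m <;> rfl

lemma diagonal_vec_zero_one {R : Type*} [Zero R] [One R] :
    diagonal ![0, 1] = single (1 : Fin 2) 1 (1 : R) := by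
  ext k m
  fin_cases k <;> fin_cases m <;> rfl

variable {R : Type*} [CommRing R]

lemma det_add_fin_two (X Z : Matrix (Fin 2) (Fin 2) R) :
    (X + Z).det = X.det + (X.adjugate * Z).trace + Z.det := by
  simp only [det_fin_two, trace_fin_two, mul_apply, Fin.sum_univ_two, adjugate_fin_two, of_apply,
    cons_val_zero, cons_val_one, cons_val_fin_one, Matrix.add_apply]
  ring

lemma trace_adjugate_mul_single (X W : Matrix (Fin 2) (Fin 2) R) {i j : Fin 2} (hij : i ≠ j) :
    (X.adjugate * (W * single i i 1)).trace = (X * single j j 1 + W * single i i 1).det := by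
  obtain ⟨rfl, rfl⟩ | ⟨rfl, rfl⟩ : i = 0 ∧ j = 1 ∨ i = 1 ∧ j = 0 := by lia
  all_goals
    simp only [det_fin_two, trace_fin_two, mul_apply, Fin.sum_univ_two, adjugate_fin_two, of_apply,
      cons_val_zero, cons_val_one, cons_val_fin_one, Matrix.add_apply, single_apply, zero_ne_one,
      one_ne_zero, and_true, and_false, if_true, if_false]
    ring

end MatrixIdentities

section DominantMode

open MeasureTheory Set

lemma hasDerivAt_matrix_apply {m n : Type*} [Finite m] [Finite n] {Y : ℝ → Matrix m n ℂ}
    {Y' : Matrix m n ℂ} {x : ℝ} (hY : HasDerivAt Y Y' x) (i : m) (j : n) :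
    HasDerivAt (fun x ↦ Y x i j) (Y' i j) x := by
  have := Fintype.ofFinite m
  have := Fintype.ofFinite n
  exact hasDerivAt_pi.1 (hasDerivAt_pi.1 hY i) j

attribute [local instance] Matrix.linftyOpNormedRing Matrix.linftyOpNormedAlgebra

lemma hasDerivAt_fundamentalSolution_apply {M : ℝ → Matrix (Fin 2) (Fin 2) ℂ} (hM : Continuous M)
    {i j : Fin 2} (hij : i ≠ j) (a : ℝ) (k : Fin 2) (x : ℝ) :
    HasDerivAt (fun x ↦ fundamentalSolution a M x i k)
      (M x i i * fundamentalSolution a M x i k + M x i j * fundamentalSolution a M x j k) x := by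
  have h := hasDerivAt_matrix_apply (hasDerivAt_fundamentalSolution (a := a) hM x) i k
  rwa [mul_apply, sum_eq_add_of_ne _ hij] at h

lemma det_fundamentalSolution {M : ℝ → Matrix (Fin 2) (Fin 2) ℂ} (hM : Continuous M) (a x : ℝ) :
    (fundamentalSolution a M x).det = Complex.exp (∫ t in a..x, (M t).trace) := by
  have hdet : ∀ x, HasDerivAt (fun x ↦ (fundamentalSolution a M x).det)
      ((M x).trace * (fundamentalSolution a M x).det) x := fun x ↦ by
    have h₀ := hasDerivAt_fundamentalSolution_apply hM zero_ne_one a (x := x)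
    have h₁ := hasDerivAt_fundamentalSolution_apply hM one_ne_zero a (x := x)
    simp only [det_fin_two, trace_fin_two]
    exact (((h₀ 0).mul (h₁ 1)).sub ((h₀ 1).mul (h₁ 0))).congr_deriv (by ring)
  rw [eq_mul_cexp_integral_of_hasDerivAt hM.matrix_trace hdet a x, fundamentalSolution_self,
    det_one, one_mul]

section Family

variable {ι : Type*} {l : Filter ι} {a b L : ℝ} {N : ι → ℝ}
  {M : ι → ℝ → Matrix (Fin 2) (Fin 2) ℂ} {i j : Fin 2}

theorem tendsto_cexp_smul_fundamentalSolution [l.IsCountablyGenerated] (hab : a < b) (hij : i ≠ j)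
    (hM : ∀ t, Continuous (M t)) (hL : 0 ≤ L)
    (hMij : ∀ᶠ t in l, ∀ x ∈ Icc a b, ‖M t x i j‖ ≤ L)
    (hMji : ∀ᶠ t in l, ∀ x ∈ Icc a b, ‖M t x j i‖ ≤ L)
    (hgap : ∀ᶠ t in l, ∀ x ∈ Icc a b, (M t x j j - M t x i i).re ≤ -N t) (hN : Tendsto N l atTop) :
    Tendsto (fun t ↦ Complex.exp (-∫ x in a..b, M t x i i) • fundamentalSolution a (M t) b) l
      (𝓝 (single i i 1)) := by
  have hsys (k : Fin 2) := (hMij.and (hMji.and hgap)).mono fun t h ↦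
    isSlowFastSystem_of_linear ((hM t).matrix_elem i i)
      (fun x ↦ hasDerivAt_fundamentalSolution_apply (hM t) hij a k x)
      (fun x ↦ (hasDerivAt_fundamentalSolution_apply (hM t) hij.symm a k x).congr_deriv
        (add_comm _ _))
      h.1 h.2.1 h.2.2
  have hinit (k : Fin 2) (t : ι) :
    ‖Complex.exp (-∫ x in a..a, M t x i i) * fundamentalSolution a (M t) a i k‖ ^ 2 +
      ‖Complex.exp (-∫ x in a..a, M t x i i) * fundamentalSolution a (M t) a j k‖ ^ 2 ≤
        ‖(1 : Matrix (Fin 2) (Fin 2) ℂ) i k‖ ^ 2 + ‖(1 : Matrix (Fin 2) (Fin 2) ℂ) j k‖ ^ 2 := by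
    simp only [intervalIntegral.integral_same, neg_zero, Complex.exp_zero, one_mul,
      fundamentalSolution_self, le_refl]
  have hslow (k : Fin 2) := tendsto_slow_sub_zero (hsys k) hL hN (hinit k) hab.le
  have hfast (k : Fin 2) := tendsto_fast_zero (hsys k) hL hN (hinit k) (right_mem_Ioc.2 hab)
  refine tendsto_pi_nhds.2 fun m ↦ tendsto_pi_nhds.2 fun k ↦ ?_
  obtain rfl | rfl : m = i ∨ m = j := by lia
  · have hslow' := (hslow k).add_const ((1 : Matrix (Fin 2) (Fin 2) ℂ) m k)
    simp only [intervalIntegral.integral_same, neg_zero, Complex.exp_zero, one_mul,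
      fundamentalSolution_self, sub_add_cancel, zero_add] at hslow'
    rw [one_apply] at hslow'
    simpa only [Matrix.smul_apply, smul_eq_mul, single_apply, true_and] using hslow'
  · simpa only [Matrix.smul_apply, smul_eq_mul, single_apply, hij, false_and, if_false]
      using hfast k

theorem tendsto_cexp_mul_det [l.IsCountablyGenerated] (hab : a < b) (hij : i ≠ j)
    (hM : ∀ t, Continuous (M t)) (hL : 0 ≤ L)
    (hMij : ∀ᶠ t in l, ∀ x ∈ Icc a b, ‖M t x i j‖ ≤ L)
    (hMji : ∀ᶠ t in l, ∀ x ∈ Icc a b, ‖M t x j i‖ ≤ L)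
    (hgap : ∀ᶠ t in l, ∀ x ∈ Icc a b, (M t x j j - M t x i i).re ≤ -N t) (hN : Tendsto N l atTop)
    (hi : Tendsto (fun t ↦ Complex.exp (-∫ x in a..b, M t x i i)) l (𝓝 0))
    (hj : Tendsto (fun t ↦ Complex.exp (∫ x in a..b, M t x j j)) l (𝓝 0))
    (Wa Wb : Matrix (Fin 2) (Fin 2) ℂ) :
    Tendsto (fun t ↦ Complex.exp (-∫ x in a..b, M t x i i) *
      (Wa + Wb * fundamentalSolution a (M t) b).det) l
      (𝓝 (Wa * single j j 1 + Wb * single i i 1).det) := by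
  have hY := tendsto_cexp_smul_fundamentalSolution hab hij hM hL hMij hMji hgap hN
  have hcross : Tendsto (fun t ↦ (Wa.adjugate * (Wb *
      Complex.exp (-∫ x in a..b, M t x i i) • fundamentalSolution a (M t) b)).trace) l
      (𝓝 (Wa * single j j 1 + Wb * single i i 1).det) := by
    have hcont : Continuous fun X ↦ (Wa.adjugate * (Wb * X)).trace :=
      Continuous.matrix_trace (by fun_prop)
    rw [← trace_adjugate_mul_single Wa Wb hij]
    exact (hcont.tendsto _).comp hY
  have hdet (t : ι) : Complex.exp (∫ x in a..b, M t x j j) =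
      Complex.exp (-∫ x in a..b, M t x i i) * (fundamentalSolution a (M t) b).det := by
    have hint (k : Fin 2) := ((hM t).matrix_elem k k).intervalIntegrable a b (μ := volume)
    have htrace (x : ℝ) : (M t x).trace = M t x i i + M t x j j :=
      sum_eq_add_of_ne (fun k ↦ M t x k k) hij
    rw [det_fundamentalSolution (hM t), ← Complex.exp_add]
    simp only [htrace]
    rw [intervalIntegral.integral_add (hint i) (hint j), neg_add_cancel_left]
  have hsum := ((hi.mul_const Wa.det).add hcross).add (hj.const_mul Wb.det)
  rw [zero_mul, mul_zero, zero_add, add_zero] at hsum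
  refine hsum.congr fun t ↦ ?_
  rw [det_add_fin_two, det_mul, hdet, mul_smul_comm, mul_smul_comm, trace_smul, smul_eq_mul]
  ring

end Family

end DominantMode

section CharacteristicFunction

open MeasureTheory Set

attribute [local instance] Matrix.linftyOpNormedRing Matrix.linftyOpNormedAlgebra

variable {n : Type*} [Fintype n] [DecidableEq n] {a b : ℝ} {A B : ℝ → Matrix n n ℂ}

/-- The characteristic function `Δ(z) = det (W_a + W_b Y(z, b))` of the boundary-value problem
`y' = (z A + B) y`, `W_a y(a) + W_b y(b) = 0`, where `Y(z, ·)` is the fundamental solution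
normalised at `a`. -/
noncomputable def characteristicFunction (a b : ℝ) (A B : ℝ → Matrix n n ℂ) (Wa Wb : Matrix n n ℂ)
    (z : ℂ) : ℂ :=
  (Wa + Wb * fundamentalSolution a (fun x ↦ z • A x + B x) b).det

lemma characteristicFunction_neg (a b : ℝ) (A B : ℝ → Matrix n n ℂ) (Wa Wb : Matrix n n ℂ) (z : ℂ) :
    characteristicFunction a b (-A) B Wa Wb z = characteristicFunction a b A B Wa Wb (-z) := by
  simp only [characteristicFunction, Pi.neg_apply, smul_neg, neg_smul]

lemma differentiable_matrix_det {F : ℂ → Matrix n n ℂ} (hF : Differentiable ℂ F) :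
    Differentiable ℂ fun z ↦ (F z).det := by
  have hentry (i j : n) : Differentiable ℂ fun z ↦ F z i j :=
    differentiable_pi.1 (differentiable_pi.1 hF i) j
  simp only [det_apply]
  fun_prop

lemma differentiable_characteristicFunction (hA : Continuous A) (hB : Continuous B)
    (Wa Wb : Matrix n n ℂ) : Differentiable ℂ (characteristicFunction a b A B Wa Wb) :=
  differentiable_matrix_det <| ((differentiable_fundamentalSolution
    (M := fun z x ↦ z • A x + B x) (by fun_prop) (fun t ↦ by fun_prop) b).const_mul Wb).const_add Wa

lemma norm_apply_le_linfty_opNorm (X : Matrix n n ℂ) (i j : n) : ‖X i j‖ ≤ ‖X‖ :=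
  calc ‖X i j‖ = ‖(X *ᵥ Pi.single j 1) i‖ := by rw [mulVec_single_one, col_apply]
    _ ≤ ‖X *ᵥ Pi.single j 1‖ := norm_le_pi_norm _ i
    _ ≤ ‖X‖ * ‖(Pi.single j 1 : n → ℂ)‖ := linfty_opNorm_mulVec _ _
    _ = ‖X‖ := by rw [Pi.norm_single, norm_one, mul_one]

lemma norm_det_le (X : Matrix n n ℂ) :
    ‖X.det‖ ≤ (Fintype.card n).factorial * ‖X‖ ^ Fintype.card n := by
  rw [← nsmul_eq_mul]
  exact det_le (abv := NormedField.toAbsoluteValue ℂ) fun i j ↦ norm_apply_le_linfty_opNorm X i j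

lemma hasExponentialType_characteristicFunction (hA : Continuous A) (hB : Continuous B)
    (Wa Wb : Matrix n n ℂ) : HasExponentialType (characteristicFunction a b A B Wa Wb) := by
  obtain ⟨CA, hCA⟩ := (isCompact_closedBall a |b - a|).exists_bound_of_continuousOn hA.continuousOn
  obtain ⟨CB, hCB⟩ := (isCompact_closedBall a |b - a|).exists_bound_of_continuousOn hB.continuousOn
  have hM (z : ℂ) (t : ℝ) (ht : |t - a| ≤ |b - a|) : ‖z • A t + B t‖ ≤ ‖z‖ * CA + CB := by
    refine (norm_add_le _ _).trans ?_
    rw [norm_smul]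
    gcongr
    exacts [hCA t ht, hCB t ht]
  have hball : a ∈ Metric.closedBall a |b - a| := Metric.mem_closedBall_self (abs_nonneg _)
  have hexp (z : ℂ) : 1 ≤ Real.exp ((‖z‖ * CA + CB) * |b - a|) := by
    have hCA₀ := (norm_nonneg _).trans (hCA a hball)
    have hCB₀ := (norm_nonneg _).trans (hCB a hball)
    exact Real.one_le_exp (by positivity)
  have hY (z : ℂ) : ‖Wa + Wb * fundamentalSolution a (fun x ↦ z • A x + B x) b‖ ≤
      (‖Wa‖ + ‖Wb‖ * ‖(1 : Matrix n n ℂ)‖) * Real.exp ((‖z‖ * CA + CB) * |b - a|) := by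
    have hfund := norm_fundamentalSolution_le (M := fun x ↦ z • A x + B x) (by fun_prop) (hM z)
    calc _ ≤ ‖Wa‖ + ‖Wb‖ * ‖fundamentalSolution a (fun x ↦ z • A x + B x) b‖ :=
          (norm_add_le _ _).trans (by gcongr; exact norm_mul_le _ _)
      _ ≤ ‖Wa‖ * Real.exp ((‖z‖ * CA + CB) * |b - a|) + ‖Wb‖ *
          (‖(1 : Matrix n n ℂ)‖ * Real.exp ((‖z‖ * CA + CB) * |b - a|)) := by
        gcongr
        exact le_mul_of_one_le_right (norm_nonneg _) (hexp z)
      _ = _ := by ring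
  refine ⟨Fintype.card n * (CA * |b - a|), .of_bound ((Fintype.card n).factorial *
    ((‖Wa‖ + ‖Wb‖ * ‖(1 : Matrix n n ℂ)‖) * Real.exp (CB * |b - a|)) ^ Fintype.card n)
    (.of_forall fun z ↦ ?_)⟩
  calc ‖characteristicFunction a b A B Wa Wb z‖
    _ ≤ (Fintype.card n).factorial * ((‖Wa‖ + ‖Wb‖ * ‖(1 : Matrix n n ℂ)‖) *
        Real.exp ((‖z‖ * CA + CB) * |b - a|)) ^ Fintype.card n :=
      (norm_det_le _).trans (by gcongr; exact hY z)
    _ = _ := by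
      rw [Real.norm_eq_abs, Real.abs_exp, mul_assoc (Fintype.card n : ℝ), Real.exp_nat_mul,
        mul_assoc, ← mul_pow, mul_assoc (_ + _), ← Real.exp_add]
      ring_nf

end CharacteristicFunction

section Asymptotics

open MeasureTheory Set

attribute [local instance] Matrix.linftyOpNormedRing Matrix.linftyOpNormedAlgebra

variable {a b : ℝ} {r : Fin 2 → ℝ → ℝ} {B : ℝ → Matrix (Fin 2) (Fin 2) ℂ}
  {Wa Wb : Matrix (Fin 2) (Fin 2) ℂ} {i j : Fin 2}

lemma integral_pos_of_continuous {f : ℝ → ℝ} (hab : a < b) (hf : Continuous f)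
    (hpos : ∀ x ∈ Icc a b, 0 < f x) : 0 < ∫ x in a..b, f x :=
  intervalIntegral.intervalIntegral_pos_of_pos_on (hf.intervalIntegrable a b)
    (fun x hx ↦ hpos x (Ioo_subset_Icc_self hx)) hab

lemma integral_smul_diagonal_add_apply (hr : ∀ k, Continuous (r k)) (hB : Continuous B) (a b t : ℝ)
    (k : Fin 2) :
    ∫ x in a..b, ((t : ℂ) • diagonal (fun k ↦ (r k x : ℂ)) + B x) k k =
      t * ↑(∫ x in a..b, r k x) + ∫ x in a..b, B x k k := by
  have hrk : Continuous fun x ↦ (r k x : ℂ) := Complex.continuous_ofReal.comp (hr k)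
  simp only [Matrix.add_apply, Matrix.smul_apply, diagonal_apply_eq, smul_eq_mul]
  rw [intervalIntegral.integral_add ((hrk.const_mul _).intervalIntegrable a b)
    ((hB.matrix_elem k k).intervalIntegrable a b), intervalIntegral.integral_const_mul,
    intervalIntegral.integral_ofReal]

theorem tendsto_cexp_mul_characteristicFunction (hab : a < b) (hij : i ≠ j)
    (hr : ∀ k, Continuous (r k)) (hB : Continuous B) (hri : ∀ x ∈ Icc a b, 0 < r i x)
    (hrj : ∀ x ∈ Icc a b, r j x < 0) (Wa Wb : Matrix (Fin 2) (Fin 2) ℂ) :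
    Tendsto (fun t : ℝ ↦ Complex.exp (-(t * ↑(∫ x in a..b, r i x) + ∫ x in a..b, B x i i)) *
      characteristicFunction a b (fun x ↦ diagonal fun k ↦ (r k x : ℂ)) B Wa Wb t) atTop
      (𝓝 (Wa * single j j 1 + Wb * single i i 1).det) := by
  obtain ⟨g, hg, hgap⟩ := isCompact_Icc.exists_forall_le' ((hr i).sub (hr j)).continuousOn
    fun x hx ↦ sub_pos.2 ((hrj x hx).trans (hri x hx))
  obtain ⟨C, hC⟩ := isCompact_Icc.exists_bound_of_continuousOn (s := Icc a b) hB.continuousOn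
  have hBC {x : ℝ} (hx : x ∈ Icc a b) (k m : Fin 2) : ‖B x k m‖ ≤ C :=
    (norm_apply_le_linfty_opNorm _ k m).trans (hC x hx)
  simp only [← integral_smul_diagonal_add_apply hr hB]
  refine tendsto_cexp_mul_det (L := C) (N := fun t ↦ t * g - 2 * C) hab hij
    (fun t ↦ by fun_prop) ((norm_nonneg _).trans (hC a (left_mem_Icc.2 hab.le))) ?_ ?_ ?_ ?_ ?_ ?_
    Wa Wb
  · exact .of_forall fun t x hx ↦ by simpa [hij] using hBC hx i j
  · exact .of_forall fun t x hx ↦ by simpa [hij.symm] using hBC hx j i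
  · filter_upwards [eventually_ge_atTop 0] with t ht x hx
    have hre : ((B x j j - B x i i).re) ≤ 2 * C :=
      calc _ ≤ ‖B x j j - B x i i‖ := Complex.re_le_norm _
        _ ≤ ‖B x j j‖ + ‖B x i i‖ := norm_sub_le _ _
        _ ≤ 2 * C := by linarith [hBC hx j j, hBC hx i i]
    have hdamp : t * g ≤ t * (r i x - r j x) := mul_le_mul_of_nonneg_left (hgap x hx) ht
    simp only [Matrix.add_apply, Matrix.smul_apply, diagonal_apply_eq, smul_eq_mul, Complex.sub_re,
      Complex.add_re, Complex.re_ofReal_mul, Complex.ofReal_re] at hre ⊢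
    linarith
  · exact tendsto_atTop_add_const_right _ _ (tendsto_id.atTop_mul_const hg)
  · simp only [integral_smul_diagonal_add_apply hr hB]
    have hint := integral_pos_of_continuous hab (hr i) hri
    refine (tendsto_cexp_mul_add_zero (neg_lt_zero.2 hint) (-∫ x in a..b, B x i i)).congr fun t ↦ ?_
    congr 1
    push_cast
    ring
  · simp only [integral_smul_diagonal_add_apply hr hB]
    have hint : 0 < ∫ x in a..b, -r j x :=
      integral_pos_of_continuous hab (hr j).neg fun x hx ↦ neg_pos.2 (hrj x hx)
    rw [intervalIntegral.integral_neg, neg_pos] at hint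
    exact tendsto_cexp_mul_add_zero hint _

theorem exp_isBigO_characteristicFunction (hab : a < b) (hij : i ≠ j)
    (hr : ∀ k, Continuous (r k)) (hB : Continuous B) (hri : ∀ x ∈ Icc a b, 0 < r i x)
    (hrj : ∀ x ∈ Icc a b, r j x < 0) (hW : IsUnit (Wa * single j j 1 + Wb * single i i 1)) :
    (fun t : ℝ ↦ Real.exp ((∫ x in a..b, r i x) * t)) =O[atTop] fun t : ℝ ↦
      characteristicFunction a b (fun x ↦ diagonal fun k ↦ (r k x : ℂ)) B Wa Wb t := by
  set I := ∫ x in a..b, r i x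
  set κ := ∫ x in a..b, B x i i
  have hlim := tendsto_cexp_mul_characteristicFunction hab hij hr hB hri hrj Wa Wb
  have hW₀ := ((isUnit_iff_isUnit_det _).1 hW).ne_zero
  have hone : (fun _ ↦ (1 : ℝ)) =O[atTop] fun t : ℝ ↦ Complex.exp (-(t * I + κ)) *
      characteristicFunction a b (fun x ↦ diagonal fun k ↦ (r k x : ℂ)) B Wa Wb t :=
    (isBigO_const_const 1 hW₀ _).trans
      ((isEquivalent_const_iff_tendsto hW₀).2 hlim).symm.isBigO
  have hexp : (fun t : ℝ ↦ Real.exp (I * t)) =O[atTop] fun t : ℝ ↦ Complex.exp (t * I + κ) := by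
    refine .of_bound ‖Complex.exp (-κ)‖ (.of_forall fun t ↦ ?_)
    rw [← norm_mul, ← Complex.exp_add, neg_add_cancel_comm_assoc, ← Complex.ofReal_mul,
      ← Complex.ofReal_exp, Complex.norm_real, mul_comm]
  refine (hexp.mul hone).congr (fun t ↦ mul_one _) fun t ↦ ?_
  rw [← mul_assoc, ← Complex.exp_add, add_neg_cancel, Complex.exp_zero, one_mul]

theorem characteristicFunction_zeros_infinite (hab : a < b) (hij : i ≠ j)
    (hr : ∀ k, Continuous (r k)) (hB : Continuous B) (hri : ∀ x ∈ Icc a b, 0 < r i x)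
    (hrj : ∀ x ∈ Icc a b, r j x < 0) (hWi : IsUnit (Wa * single i i 1 + Wb * single j j 1))
    (hWj : IsUnit (Wa * single j j 1 + Wb * single i i 1)) :
    {z | characteristicFunction a b (fun x ↦ diagonal fun k ↦ (r k x : ℂ)) B Wa Wb z
      = 0}.Infinite := by
  have hA : Continuous fun x ↦ diagonal fun k ↦ (r k x : ℂ) := by fun_prop
  have hpos := exp_isBigO_characteristicFunction hab hij hr hB hri hrj hWj
  have hneg := exp_isBigO_characteristicFunction hab hij.symm (r := fun k x ↦ -r k x)
    (fun k ↦ (hr k).neg) hB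
    (fun x hx ↦ neg_pos.2 (hrj x hx)) (fun x hx ↦ neg_lt_zero.2 (hri x hx)) hWi
  have hA_neg : (fun x ↦ diagonal fun k ↦ ((-r k x : ℝ) : ℂ)) =
      -fun x ↦ diagonal fun k ↦ (r k x : ℂ) := by
    ext1 x
    simp only [Complex.ofReal_neg, Pi.neg_apply, diagonal_neg]
  simp only [hA_neg, characteristicFunction_neg] at hneg
  refine zeros_infinite_of_exp_isBigO_mul_neg (δ := (∫ x in a..b, r i x) + ∫ x in a..b, -r j x)
    (differentiable_characteristicFunction hA hB Wa Wb)
    (hasExponentialType_characteristicFunction hA hB Wa Wb) ?_ ?_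
  · exact add_pos (integral_pos_of_continuous hab (hr i) hri)
      (integral_pos_of_continuous hab (hr j).neg fun x hx ↦ neg_pos.2 (hrj x hx))
  · exact (hpos.mul hneg).congr_left fun t ↦ by rw [← Real.exp_add, add_mul]

theorem characteristicFunction_zeros_countable (hab : a < b) (hij : i ≠ j)
    (hr : ∀ k, Continuous (r k)) (hB : Continuous B) (hri : ∀ x ∈ Icc a b, 0 < r i x)
    (hrj : ∀ x ∈ Icc a b, r j x < 0) (hW : IsUnit (Wa * single j j 1 + Wb * single i i 1)) :
    {z | characteristicFunction a b (fun x ↦ diagonal fun k ↦ (r k x : ℂ)) B Wa Wb z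
      = 0}.Countable := by
  obtain ⟨t, ht⟩ :=
    (exp_isBigO_characteristicFunction hab hij hr hB hri hrj hW).eq_zero_imp.exists
  exact zeros_countable (differentiable_characteristicFunction (by fun_prop) hB Wa Wb)
    ⟨t, fun hzero ↦ Real.exp_ne_zero _ (ht hzero)⟩

end Asymptotics

section Eigenvalues

open Set

attribute [local instance] Matrix.linftyOpNormedRing Matrix.linftyOpNormedAlgebra

section Uniqueness

variable {n : Type*} [Fintype n] [DecidableEq n] {a b : ℝ} {M : ℝ → Matrix n n ℂ}

lemma hasDerivAt_fundamentalSolution_mulVec (hM : Continuous M) (a : ℝ) (v : n → ℂ) (x : ℝ) :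
    HasDerivAt (fun x ↦ fundamentalSolution a M x *ᵥ v)
      (M x *ᵥ (fundamentalSolution a M x *ᵥ v)) x := by
  rw [mulVec_mulVec]
  exact hasDerivAt_pi.2 fun i ↦ HasDerivAt.fun_sum fun j _ ↦
    (hasDerivAt_matrix_apply (hasDerivAt_fundamentalSolution hM x) i j).mul_const (v j)

lemma eq_fundamentalSolution_mulVec (hM : Continuous M) {y : ℝ → n → ℂ}
    (hy : ∀ x ∈ Icc a b, HasDerivWithinAt y (M x *ᵥ y x) (Icc a b) x) :
    ∀ x ∈ Icc a b, y x = fundamentalSolution a M x *ᵥ y a := by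
  obtain ⟨C, hC⟩ := isCompact_Icc.exists_bound_of_continuousOn (s := Icc a b) hM.continuousOn
  have hsol := hasDerivAt_fundamentalSolution_mulVec hM a (y a)
  have hlip (x : ℝ) (hx : x ∈ Ico a b) : LipschitzOnWith C.toNNReal (M x *ᵥ ·) univ :=
    (LipschitzWith.of_dist_le' fun v w ↦ by
      rw [dist_eq_norm, dist_eq_norm, ← mulVec_sub]
      exact (linfty_opNorm_mulVec _ _).trans
        (by gcongr; exact hC x (Ico_subset_Icc_self hx))).lipschitzOnWith
  exact ODE_solution_unique_of_mem_Icc_right hlip (fun x hx ↦ (hy x hx).continuousWithinAt)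
    (fun x hx ↦ (hy x (Ico_subset_Icc_self hx)).mono_of_mem_nhdsWithin
      (Icc_mem_nhdsGE_of_mem hx)) (fun _ _ ↦ mem_univ _)
    (fun x _ ↦ (hsol x).continuousAt.continuousWithinAt) (fun x _ ↦ (hsol x).hasDerivWithinAt)
    (fun _ _ ↦ mem_univ _) (by simp only [fundamentalSolution_self, one_mulVec])

end Uniqueness

variable {a b : ℝ} {A A' B B' : ℝ → Matrix (Fin 2) (Fin 2) ℂ} {Wa Wb : Matrix (Fin 2) (Fin 2) ℂ}

theorem isBVPEigenvalue_iff_characteristicFunction_eq_zero (hab : a ≤ b) {lam z : ℂ}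
    (hA' : Continuous A') (hB' : Continuous B')
    (hcoeff : ∀ x ∈ Icc a b, lam • A x + B x = z • A' x + B' x) :
    IsBVPEigenvalue a b A B Wa Wb lam ↔ characteristicFunction a b A' B' Wa Wb z = 0 := by
  have hM : Continuous fun x ↦ z • A' x + B' x := by fun_prop
  rw [characteristicFunction, ← exists_mulVec_eq_zero_iff]
  constructor
  · rintro ⟨y, y', hy, -, ⟨x₀, hx₀, hyx₀⟩, hode, hbc⟩
    have hyY := eq_fundamentalSolution_mulVec hM fun x hx ↦ by
      simpa only [hode x hx, hcoeff x hx] using hy x hx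
    refine ⟨y a, fun hya ↦ hyx₀ ?_, ?_⟩
    · rw [hyY x₀ hx₀, hya, mulVec_zero]
    · rw [add_mulVec, ← mulVec_mulVec, ← hyY b (right_mem_Icc.2 hab), hbc]
  · rintro ⟨v, hv, hbc⟩
    have hsol := hasDerivAt_fundamentalSolution_mulVec hM a v
    have hcont : Continuous fun x ↦ fundamentalSolution a (fun x ↦ z • A' x + B' x) x *ᵥ v :=
      continuous_iff_continuousAt.2 fun x ↦ (hsol x).continuousAt
    refine ⟨_, _, fun x _ ↦ (hsol x).hasDerivWithinAt, (hM.matrix_mulVec hcont).continuousOn,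
      ⟨a, left_mem_Icc.2 hab, ?_⟩, fun x hx ↦ by rw [hcoeff x hx], ?_⟩
    · rwa [fundamentalSolution_self, one_mulVec]
    · rwa [fundamentalSolution_self, one_mulVec, mulVec_mulVec, ← add_mulVec]

lemma exists_continuous_eqOn_Icc {X : Type*} [TopologicalSpace X] {f : ℝ → X} (hab : a ≤ b)
    (hf : ContinuousOn f (Icc a b)) : ∃ g, Continuous g ∧ EqOn g f (Icc a b) :=
  ⟨IccExtend hab ((Icc a b).domRestrict f), hf.domRestrict.Icc_extend',
    fun _ hx ↦ IccExtend_of_mem hab _ hx⟩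

theorem setOf_isBVPEigenvalue_infinite_and_countable (hab : a < b) {ω : ℂ} (hω : ω ≠ 0)
    {r : Fin 2 → ℝ → ℝ} (hr : ∀ k, Continuous (r k)) (hr₀ : ∀ x ∈ Icc a b, 0 < r 0 x)
    (hr₁ : ∀ x ∈ Icc a b, r 1 x < 0) (hB' : Continuous B')
    (hA : ∀ x ∈ Icc a b, A x = ω • diagonal fun k ↦ (r k x : ℂ)) (hB : EqOn B' B (Icc a b))
    (hW₁ : IsUnit (Wa * single 0 0 1 + Wb * single 1 1 1))
    (hW₂ : IsUnit (Wa * single 1 1 1 + Wb * single 0 0 1)) :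
    {lam | IsBVPEigenvalue a b A B Wa Wb lam}.Infinite ∧
      {lam | IsBVPEigenvalue a b A B Wa Wb lam}.Countable := by
  have hset : {lam | IsBVPEigenvalue a b A B Wa Wb lam} = Equiv.mulRight₀ ω hω ⁻¹'
      {z | characteristicFunction a b (fun x ↦ diagonal fun k ↦ (r k x : ℂ)) B' Wa Wb z = 0} :=
    Set.ext fun lam ↦ isBVPEigenvalue_iff_characteristicFunction_eq_zero hab.le (by fun_prop) hB'
      fun x hx ↦ by rw [hA x hx, hB hx, smul_smul]; rfl
  rw [hset]
  exact ⟨(characteristicFunction_zeros_infinite hab zero_ne_one hr hB' hr₀ hr₁ hW₁ hW₂).preimage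
      (Equiv.range_eq_univ _ ▸ subset_univ _),
    (characteristicFunction_zeros_countable hab zero_ne_one hr hB' hr₀ hr₁ hW₂).preimage
      (Equiv.injective _)⟩

end Eigenvalues

open Set in
theorem bvp_eigenvalues_countably_infinite_general {a b : ℝ} (hab : a < b) {ω : ℂ} (hω : ω ≠ 0)
    {ρ₁ ρ₂ : ℝ → ℝ} (hρ₁pos : ∀ x ∈ Icc a b, 0 < ρ₁ x) (hρ₂pos : ∀ x ∈ Icc a b, 0 < ρ₂ x)
    (hρ₁ : ContinuousOn ρ₁ (Icc a b)) (hρ₂ : ContinuousOn ρ₂ (Icc a b))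
    {A B : ℝ → Matrix (Fin 2) (Fin 2) ℂ}
    (hA : ∀ x ∈ Icc a b, A x = diagonal ![ω * (ρ₁ x : ℂ), -(ω * (ρ₂ x : ℂ))])
    (hB : ContinuousOn B (Icc a b)) {Wa Wb : Matrix (Fin 2) (Fin 2) ℂ}
    (hW₁ : IsUnit (Wa * diagonal ![1, 0] + Wb * diagonal ![0, 1]))
    (hW₂ : IsUnit (Wa * diagonal ![0, 1] + Wb * diagonal ![1, 0])) :
    {lam : ℂ | IsBVPEigenvalue a b A B Wa Wb lam}.Infinite ∧
      {lam : ℂ | IsBVPEigenvalue a b A B Wa Wb lam}.Countable := by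
  obtain ⟨σ₁, hσ₁, hσρ₁⟩ := exists_continuous_eqOn_Icc hab.le hρ₁
  obtain ⟨σ₂, hσ₂, hσρ₂⟩ := exists_continuous_eqOn_Icc hab.le hρ₂
  obtain ⟨C, hC, hCB⟩ := exists_continuous_eqOn_Icc hab.le hB
  rw [diagonal_vec_one_zero, diagonal_vec_zero_one] at hW₁ hW₂
  refine setOf_isBVPEigenvalue_infinite_and_countable hab hω (r := ![σ₁, -σ₂])
    (Fin.forall_fin_two.2 ⟨hσ₁, hσ₂.neg⟩)
    (fun x hx ↦ (hρ₁pos x hx).trans_eq (hσρ₁ hx).symm)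
    (fun x hx ↦ neg_lt_zero.2 ((hρ₂pos x hx).trans_eq (hσρ₂ hx).symm)) hC (fun x hx ↦ ?_) hCB
    hW₁ hW₂
  rw [hA x hx, ← diagonal_smul, ← hσρ₁ hx, ← hσρ₂ hx]
  congr 1
  ext k
  fin_cases k <;> simp

/-- The set of eigenvalues of the first-order boundary-value problem is countably
infinite. -/
theorem bvp_eigenvalues_countably_infinite
    (a b φ : ℝ) (hab : a < b)
    (ρ₁ ρ₂ : ℝ → ℝ)
    (hρ₁pos : ∀ x ∈ Set.Icc a b, 0 < ρ₁ x) (hρ₂pos : ∀ x ∈ Set.Icc a b, 0 < ρ₂ x)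
    (hρ₁ : ContDiffOn ℝ 1 ρ₁ (Set.Icc a b)) (hρ₂ : ContDiffOn ℝ 1 ρ₂ (Set.Icc a b))
    (A : ℝ → Matrix (Fin 2) (Fin 2) ℂ)
    (hA : ∀ x, A x = Matrix.diagonal
      ![Complex.exp (Complex.I * φ) * (ρ₁ x : ℂ),
        -(Complex.exp (Complex.I * φ) * (ρ₂ x : ℂ))])
    (B : ℝ → Matrix (Fin 2) (Fin 2) ℂ)
    (hB : ∀ i j, ContDiffOn ℝ 1 (fun x => B x i j) (Set.Icc a b))
    (Wa Wb : Matrix (Fin 2) (Fin 2) ℂ)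
    (E₁₁ E₂₂ Ω₁ Ω₂ : Matrix (Fin 2) (Fin 2) ℂ)
    (hE₁₁ : E₁₁ = Matrix.diagonal ![1, 0]) (hE₂₂ : E₂₂ = Matrix.diagonal ![0, 1])
    (hΩ₁ : Ω₁ = Wa * E₁₁ + Wb * E₂₂) (hΩ₂ : Ω₂ = Wa * E₂₂ + Wb * E₁₁)
    (hΩ₁inv : IsUnit Ω₁) (hΩ₂inv : IsUnit Ω₂) :
    {lam : ℂ | IsBVPEigenvalue a b A B Wa Wb lam}.Infinite ∧
    {lam : ℂ | IsBVPEigenvalue a b A B Wa Wb lam}.Countable :=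
  bvp_eigenvalues_countably_infinite_general hab (Complex.exp_ne_zero _) hρ₁pos hρ₂pos
    hρ₁.continuousOn hρ₂.continuousOn (fun x _ ↦ hA x)
    (continuousOn_pi.2 fun i ↦ continuousOn_pi.2 fun j ↦ (hB i j).continuousOn)
    (hE₁₁ ▸ hE₂₂ ▸ hΩ₁ ▸ hΩ₁inv) (hE₁₁ ▸ hE₂₂ ▸ hΩ₂ ▸ hΩ₂inv)
end

section
/- The set of eigenvalues of the Dirac-type boundary-value problem is countably infinite, i.e., the set {λ ∈ ℝ : there is a nonzero continuously differentiable pair (f,g) on [a,b] satisfying the Dirac-type system with parameter λ and the separated boundary conditions} is infinite and countable. -/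
/-- The pair `(f,g)`, continuously differentiable on `[a,b]`, satisfies the
Dirac-type system with parameter `lam`:
`-g' + t g + (p - lam ρ) f = 0` and `f' + t f + (q - lam ρ) g = 0` on `[a,b]`. -/
def SatisfiesDiracSystem (a b : ℝ) (p q t ρ : ℝ → ℝ) (lam : ℝ) (f g : ℝ → ℝ) : Prop :=
  ∃ f' g' : ℝ → ℝ,
    (∀ x ∈ Set.Icc a b, HasDerivWithinAt f (f' x) (Set.Icc a b) x) ∧
    (∀ x ∈ Set.Icc a b, HasDerivWithinAt g (g' x) (Set.Icc a b) x) ∧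
    ContinuousOn f' (Set.Icc a b) ∧ ContinuousOn g' (Set.Icc a b) ∧
    (∀ x ∈ Set.Icc a b, -g' x + t x * g x + (p x - lam * ρ x) * f x = 0) ∧
    (∀ x ∈ Set.Icc a b, f' x + t x * f x + (q x - lam * ρ x) * g x = 0)

/-- The separated boundary conditions
`f(a) cos α + g(a) sin α = 0` and `f(b) cos β + g(b) sin β = 0`. -/
def DiracBC (a b α β : ℝ) (f g : ℝ → ℝ) : Prop :=
  f a * Real.cos α + g a * Real.sin α = 0 ∧
  f b * Real.cos β + g b * Real.sin β = 0

/-- `lam` is an eigenvalue of the Dirac-type boundary-value problem. -/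
def IsDiracEigenvalue (a b : ℝ) (p q t ρ : ℝ → ℝ) (α β lam : ℝ) : Prop :=
  ∃ f g : ℝ → ℝ,
    SatisfiesDiracSystem a b p q t ρ lam f g ∧
    (∃ x ∈ Set.Icc a b, (f x ≠ 0 ∨ g x ≠ 0)) ∧
    DiracBC a b α β f g

/-!
In Prüfer coordinates `f = r cos θ`, `g = r sin θ` the phase satisfies the scalar equation
`θ' = p cos² θ + q sin² θ + t sin 2θ - λ ρ`, which does not involve `r`. Starting it at
`θ a = α + π / 2` encodes the boundary condition at `a`; the solutions satisfying that condition
form a line, so `λ` is an eigenvalue if and only if `cos (θ_λ(b) - β) = 0`. As `ρ > 0`, the map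
`λ ↦ θ_λ(b)` is strictly decreasing, continuous and unbounded in both directions, hence a bijection
of `ℝ`, and the eigenvalues correspond to the zeros of `cos (· - β)`.
-/

open Set Function
open scoped NNReal

section OrdinaryDifferentialEquations

variable {a b : ℝ} {E : Type*} [NormedAddCommGroup E] [NormedSpace ℝ E]

lemma hasDerivWithinAt_Ici_of_Icc {f : ℝ → E} {f' : E} {x : ℝ} (hx : x ∈ Ico a b)
    (h : HasDerivWithinAt f f' (Icc a b) x) : HasDerivWithinAt f f' (Ici x) x :=
  h.mono_of_mem_nhdsWithin (Icc_mem_nhdsGE_of_mem hx)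

lemma exists_hasDerivWithinAt_of_lipschitzWith_of_norm_le [CompleteSpace E] {v : ℝ → E → E}
    {K L : ℝ≥0} (hab : a ≤ b) (hlip : ∀ x ∈ Icc a b, LipschitzWith K (v x))
    (hcont : ∀ u, ContinuousOn (v · u) (Icc a b)) (hbdd : ∀ x ∈ Icc a b, ∀ u, ‖v x u‖ ≤ L)
    (y₀ : E) :
    ∃ y : ℝ → E, y a = y₀ ∧ ∀ x ∈ Icc a b, HasDerivWithinAt y (v x (y x)) (Icc a b) x := by
  have hv : IsPicardLindelof v (⟨a, left_mem_Icc.2 hab⟩ : Icc a b) y₀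
      (L * (b - a).toNNReal) 0 L K :=
    { lipschitzOnWith := fun x hx => (hlip x hx).lipschitzOnWith
      continuousOn := fun u _ => hcont u
      norm_le := fun x hx u _ => hbdd x hx u
      mul_max_le := by simp [hab] }
  exact hv.exists_eq_forall_mem_Icc_hasDerivWithinAt₀

lemma continuous_trajectory_of_dist_le {Λ : Type*} [PseudoMetricSpace Λ] {v : Λ → ℝ → E → E}
    {K : ℝ≥0} {M : ℝ} {y : Λ → ℝ → E} (hlip : ∀ l, ∀ x ∈ Icc a b, LipschitzWith K (v l x))
    (hdist : ∀ l m, ∀ x ∈ Icc a b, ∀ u, dist (v l x u) (v m x u) ≤ M * dist l m)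
    (hy : ∀ l, ∀ x ∈ Icc a b, HasDerivWithinAt (y l) (v l x (y l x)) (Icc a b) x)
    (hya : ∀ l m, y l a = y m a) {x : ℝ} (hx : x ∈ Icc a b) : Continuous fun l => y l x := by
  have hcont (l : Λ) : ContinuousOn (y l) (Icc a b) := HasDerivWithinAt.continuousOn (hy l)
  have hright (l : Λ) : ∀ s ∈ Ico a b, HasDerivWithinAt (y l) (v l s (y l s)) (Ici s) s :=
    fun s hs => hasDerivWithinAt_Ici_of_Icc hs (hy l s (Ico_subset_Icc_self hs))
  have gronwall (l m : Λ) :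
      dist (y l x) (y m x) ≤ gronwallBound 0 K (M * dist l m + 0) (x - a) :=
    dist_le_of_approx_trajectories_ODE_of_mem (s := fun _ => univ)
      (fun s hs => (hlip m s (Ico_subset_Icc_self hs)).lipschitzOnWith)
      (hcont l) (hright l) (fun s hs => hdist l m s (Ico_subset_Icc_self hs) _)
      (fun _ _ => mem_univ _) (hcont m) (hright m) (fun _ _ => (dist_self _).le)
      (fun _ _ => mem_univ _) (by rw [hya l m, dist_self]) x hx
  refine continuous_iff_continuousAt.2 fun m => tendsto_iff_dist_tendsto_zero.2 <|
    squeeze_zero (fun _ => dist_nonneg) (fun l => gronwall l m) ?_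
  have hbound : Continuous fun l => gronwallBound 0 K (M * dist l m + 0) (x - a) :=
    (gronwallBound_continuous_ε 0 K (x - a)).comp (by fun_prop)
  simpa [gronwallBound_ε0_δ0] using hbound.tendsto m

lemma lt_right_of_hasDerivWithinAt_lt_of_eq {f g f' g' : ℝ → ℝ} (hab : a < b)
    (hf : ∀ x ∈ Icc a b, HasDerivWithinAt f (f' x) (Icc a b) x)
    (hg : ∀ x ∈ Icc a b, HasDerivWithinAt g (g' x) (Icc a b) x)
    (ha : f a ≤ g a) (hlt : ∀ x ∈ Icc a b, f x = g x → f' x < g' x) : f b < g b := by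
  have hb : b ∈ Icc a b := right_mem_Icc.2 hab.le
  have hle : ∀ ⦃x⦄, x ∈ Icc a b → f x ≤ g x :=
    image_le_of_deriv_right_lt_deriv_boundary' (HasDerivWithinAt.continuousOn hf)
      (fun x hx => hasDerivWithinAt_Ici_of_Icc hx (hf x (Ico_subset_Icc_self hx))) ha
      (HasDerivWithinAt.continuousOn hg)
      (fun x hx => hasDerivWithinAt_Ici_of_Icc hx (hg x (Ico_subset_Icc_self hx)))
      (fun x hx => hlt x (Ico_subset_Icc_self hx))
  refine (hle hb).lt_of_ne fun heq => ?_
  -- If the graphs met at `b`, then `g - f ≥ 0` would attain its minimum there.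
  have hmin : IsMinOn (fun x => g x - f x) (Icc a b) b := fun x hx => by
    simpa [heq] using hle hx
  have hcone : a - b ∈ posTangentConeAt (Icc a b) b :=
    sub_mem_posTangentConeAt_of_segment_subset (by rw [segment_symm, segment_eq_Icc hab.le])
  have hderiv : 0 ≤ (a - b) * (g' b - f' b) := by
    simpa using hmin.localize.hasFDerivWithinAt_nonneg
      ((hg b hb).fun_sub (hf b hb)).hasFDerivWithinAt hcone
  nlinarith [hlt b hb heq]

end OrdinaryDifferentialEquations

section PruferRates

/-- The velocity of the Prüfer phase `u` for a Dirac system with coefficients `p`, `q`, `t` at the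
given point and `λ = 0`; the spectral parameter only subtracts `λ ρ` from it. -/
noncomputable def pruferRate (p q t u : ℝ) : ℝ :=
  p * Real.cos u ^ 2 + q * Real.sin u ^ 2 + t * Real.sin (2 * u)

/-- The logarithmic derivative of the Prüfer amplitude at phase `u`, for a Dirac system with
coefficients `p`, `q`, `t` at the given point; it does not depend on the spectral parameter. -/
noncomputable def pruferGrowth (p q t u : ℝ) : ℝ :=
  (p - q) / 2 * Real.sin (2 * u) - t * Real.cos (2 * u)

lemma pruferGrowth_mul_sin_add_pruferRate_mul_cos (p q t u : ℝ) :
    pruferGrowth p q t u * Real.sin u + pruferRate p q t u * Real.cos u =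
      t * Real.sin u + p * Real.cos u := by
  rw [pruferGrowth, pruferRate, Real.sin_two_mul, Real.cos_two_mul']
  linear_combination (t * Real.sin u + p * Real.cos u) * Real.sin_sq_add_cos_sq u

lemma pruferGrowth_mul_cos_sub_pruferRate_mul_sin (p q t u : ℝ) :
    pruferGrowth p q t u * Real.cos u - pruferRate p q t u * Real.sin u =
      -(t * Real.cos u + q * Real.sin u) := by
  rw [pruferGrowth, pruferRate, Real.sin_two_mul, Real.cos_two_mul']
  linear_combination -(t * Real.cos u + q * Real.sin u) * Real.sin_sq_add_cos_sq u

lemma abs_pruferRate_le (p q t u : ℝ) : |pruferRate p q t u| ≤ |p| + |q| + |t| := by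
  have hcos : |Real.cos u ^ 2| ≤ 1 := by simpa using Real.abs_cos_le_one u
  have hsin : |Real.sin u ^ 2| ≤ 1 := by simpa using Real.abs_sin_le_one u
  calc |pruferRate p q t u|
      ≤ |p * Real.cos u ^ 2| + |q * Real.sin u ^ 2| + |t * Real.sin (2 * u)| := abs_add_three _ _ _
    _ ≤ |p| + |q| + |t| := by
      simp only [abs_mul p, abs_mul q, abs_mul t]
      gcongr
      · exact mul_le_of_le_one_right (abs_nonneg p) hcos
      · exact mul_le_of_le_one_right (abs_nonneg q) hsin
      · exact mul_le_of_le_one_right (abs_nonneg t) (Real.abs_sin_le_one _)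

lemma abs_pruferGrowth_le (p q t u : ℝ) : |pruferGrowth p q t u| ≤ |p| + |q| + |t| := by
  have hpq : |(p - q) / 2| ≤ |p| + |q| := by
    rw [abs_div, abs_two]
    linarith [abs_sub p q, abs_nonneg p, abs_nonneg q]
  calc |pruferGrowth p q t u|
      ≤ |(p - q) / 2 * Real.sin (2 * u)| + |t * Real.cos (2 * u)| := abs_sub _ _
    _ ≤ |(p - q) / 2| + |t| := by
      rw [abs_mul, abs_mul t]
      gcongr
      · exact mul_le_of_le_one_right (abs_nonneg _) (Real.abs_sin_le_one _)
      · exact mul_le_of_le_one_right (abs_nonneg t) (Real.abs_cos_le_one _)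
    _ ≤ |p| + |q| + |t| := by gcongr

lemma hasDerivAt_pruferRate (p q t u : ℝ) :
    HasDerivAt (pruferRate p q t) (-2 * pruferGrowth p q t u) u := by
  have htwo : HasDerivAt (fun u : ℝ => 2 * u) 2 u := by
    simpa using (hasDerivAt_id u).const_mul (2 : ℝ)
  refine (((((Real.hasDerivAt_cos u).pow 2).const_mul p).add
    (((Real.hasDerivAt_sin u).pow 2).const_mul q)).add
      (htwo.sin.const_mul t)).congr_deriv ?_
  rw [pruferGrowth, Real.sin_two_mul]
  push_cast
  ring

lemma lipschitzWith_pruferRate (p q t : ℝ) :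
    LipschitzWith (2 * (‖p‖₊ + ‖q‖₊ + ‖t‖₊)) (pruferRate p q t) := by
  refine lipschitzWith_of_nnnorm_deriv_le
    (fun u => (hasDerivAt_pruferRate p q t u).differentiableAt) fun u => ?_
  rw [(hasDerivAt_pruferRate p q t u).deriv, nnnorm_mul, nnnorm_neg, Real.nnnorm_two]
  gcongr
  exact abs_pruferGrowth_le p q t u

end PruferRates

section PruferPhase

variable {a b : ℝ} {p q t ρ : ℝ → ℝ} {lam : ℝ} {θ : ℝ → ℝ}

/-- `θ` is a Prüfer phase on `[a, b]`: the polar angle of a solution of the Dirac-type system with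
parameter `lam`, characterised by the scalar equation it satisfies. -/
def IsPruferPhase (a b : ℝ) (p q t ρ : ℝ → ℝ) (lam : ℝ) (θ : ℝ → ℝ) : Prop :=
  ∀ x ∈ Icc a b,
    HasDerivWithinAt θ (pruferRate (p x) (q x) (t x) (θ x) - lam * ρ x) (Icc a b) x

lemma exists_nnnorm_add_nnnorm_add_nnnorm_le (hp : ContinuousOn p (Icc a b))
    (hq : ContinuousOn q (Icc a b)) (ht : ContinuousOn t (Icc a b)) :
    ∃ M : ℝ≥0, ∀ x ∈ Icc a b, ‖p x‖₊ + ‖q x‖₊ + ‖t x‖₊ ≤ M := by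
  obtain ⟨M, hM⟩ := isCompact_Icc.bddAbove_image (f := fun x => ‖p x‖₊ + ‖q x‖₊ + ‖t x‖₊)
    ((hp.nnnorm.add hq.nnnorm).add ht.nnnorm)
  exact ⟨M, fun x hx => hM (mem_image_of_mem _ hx)⟩

lemma exists_lipschitzWith_pruferRate (hp : ContinuousOn p (Icc a b))
    (hq : ContinuousOn q (Icc a b)) (ht : ContinuousOn t (Icc a b)) (ρ : ℝ → ℝ) :
    ∃ K : ℝ≥0, ∀ lam, ∀ x ∈ Icc a b,
      LipschitzWith K fun u => pruferRate (p x) (q x) (t x) u - lam * ρ x := by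
  obtain ⟨M, hM⟩ := exists_nnnorm_add_nnnorm_add_nnnorm_le hp hq ht
  refine ⟨2 * M, fun lam x hx => LipschitzWith.of_dist_le_mul fun u w => ?_⟩
  rw [dist_sub_right]
  exact ((lipschitzWith_pruferRate _ _ _).weaken (by gcongr; exact hM x hx)).dist_le_mul u w

lemma exists_isPruferPhase (hab : a ≤ b) (hp : ContinuousOn p (Icc a b))
    (hq : ContinuousOn q (Icc a b)) (ht : ContinuousOn t (Icc a b))
    (hρ : ContinuousOn ρ (Icc a b)) (lam y : ℝ) :
    ∃ θ : ℝ → ℝ, θ a = y ∧ IsPruferPhase a b p q t ρ lam θ := by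
  obtain ⟨K, hK⟩ := exists_lipschitzWith_pruferRate hp hq ht ρ
  obtain ⟨M, hM⟩ := exists_nnnorm_add_nnnorm_add_nnnorm_le hp hq ht
  obtain ⟨N, hN⟩ := isCompact_Icc.exists_bound_of_continuousOn hρ
  refine exists_hasDerivWithinAt_of_lipschitzWith_of_norm_le (L := M + ‖lam‖₊ * N.toNNReal) hab
    (hK lam) (fun u => ?_) (fun x hx u => ?_) y
  · unfold pruferRate
    fun_prop
  · calc ‖pruferRate (p x) (q x) (t x) u - lam * ρ x‖
        ≤ ‖pruferRate (p x) (q x) (t x) u‖ + ‖lam * ρ x‖ := norm_sub_le _ _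
      _ ≤ M + ‖lam‖ * N.toNNReal := by
        rw [norm_mul]
        gcongr
        · exact (abs_pruferRate_le _ _ _ u).trans (hM x hx)
        · exact (hN x hx).trans (Real.le_coe_toNNReal N)

namespace IsPruferPhase

lemma lt_right_of_lt {mu : ℝ} {η : ℝ → ℝ} (hab : a < b) (hρ : ∀ x ∈ Icc a b, 0 < ρ x)
    (hθ : IsPruferPhase a b p q t ρ lam θ) (hη : IsPruferPhase a b p q t ρ mu η)
    (hlt : lam < mu) (ha : η a ≤ θ a) : η b < θ b :=
  lt_right_of_hasDerivWithinAt_lt_of_eq hab hη hθ ha fun x hx heq => by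
    rw [heq]
    exact sub_lt_sub_left (mul_lt_mul_of_pos_right hlt (hρ x hx)) _

lemma exists_sub_eq_mul (hab : a < b) (hθ : IsPruferPhase a b p q t ρ lam θ) :
    ∃ x ∈ Icc a b,
      θ b - θ a = (pruferRate (p x) (q x) (t x) (θ x) - lam * ρ x) * (b - a) := by
  obtain ⟨x, hx, hslope⟩ := exists_hasDerivAt_eq_slope θ _ hab (HasDerivWithinAt.continuousOn hθ)
    fun x hx => (hθ x (Ioo_subset_Icc_self hx)).hasDerivAt (Icc_mem_nhds hx.1 hx.2)
  exact ⟨x, Ioo_subset_Icc_self hx, by rw [hslope, div_mul_cancel₀ _ (sub_pos.2 hab).ne']⟩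

lemma continuous_apply {θ : ℝ → ℝ → ℝ} (hp : ContinuousOn p (Icc a b))
    (hq : ContinuousOn q (Icc a b)) (ht : ContinuousOn t (Icc a b))
    (hρ : ContinuousOn ρ (Icc a b)) (hθ : ∀ lam, IsPruferPhase a b p q t ρ lam (θ lam))
    (ha : ∀ lam mu, θ lam a = θ mu a) {x : ℝ} (hx : x ∈ Icc a b) :
    Continuous fun lam => θ lam x := by
  obtain ⟨K, hK⟩ := exists_lipschitzWith_pruferRate hp hq ht ρ
  obtain ⟨M, hM⟩ := isCompact_Icc.exists_bound_of_continuousOn hρ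
  refine continuous_trajectory_of_dist_le (M := M) hK (fun lam mu x hx u => ?_) hθ ha hx
  rw [dist_sub_left, dist_eq_norm, ← sub_mul, norm_mul, ← dist_eq_norm, mul_comm]
  gcongr
  exact hM x hx

end IsPruferPhase

lemma exists_abs_pruferRate_add_lt_mul (hp : ContinuousOn p (Icc a b))
    (hq : ContinuousOn q (Icc a b)) (ht : ContinuousOn t (Icc a b))
    (hρ : ContinuousOn ρ (Icc a b)) (hρpos : ∀ x ∈ Icc a b, 0 < ρ x) (s : ℝ) :
    ∃ C, ∀ x ∈ Icc a b, ∀ u, |pruferRate (p x) (q x) (t x) u| + s < C * ρ x := by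
  obtain ⟨M, hM⟩ := exists_nnnorm_add_nnnorm_add_nnnorm_le hp hq ht
  obtain ⟨C, hC⟩ := isCompact_Icc.exists_bound_of_continuousOn
    (continuousOn_const (c := M + s + 1) |>.div hρ fun x hx => (hρpos x hx).ne')
  refine ⟨C, fun x hx u => ?_⟩
  have hrate : |pruferRate (p x) (q x) (t x) u| ≤ M :=
    (abs_pruferRate_le _ _ _ u).trans (hM x hx)
  have hquot : M + s + 1 ≤ C * ρ x :=
    (div_le_iff₀ (hρpos x hx)).1 ((le_abs_self _).trans (hC x hx))
  linarith

lemma IsPruferPhase.surjective_apply_right {θ : ℝ → ℝ → ℝ} (hab : a < b)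
    (hp : ContinuousOn p (Icc a b)) (hq : ContinuousOn q (Icc a b))
    (ht : ContinuousOn t (Icc a b)) (hρ : ContinuousOn ρ (Icc a b))
    (hρpos : ∀ x ∈ Icc a b, 0 < ρ x) (hθ : ∀ lam, IsPruferPhase a b p q t ρ lam (θ lam))
    {y : ℝ} (ha : ∀ lam, θ lam a = y) : Surjective fun lam => θ lam b := by
  intro z
  have hba : 0 < b - a := sub_pos.2 hab
  obtain ⟨C, hC⟩ := exists_abs_pruferRate_add_lt_mul hp hq ht hρ hρpos (|z - y| / (b - a))
  have hz : |z - y| / (b - a) * (b - a) = |z - y| := div_mul_cancel₀ _ hba.ne'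
  refine mem_range_of_exists_le_of_exists_ge
    (continuous_apply hp hq ht hρ hθ (fun lam mu => by rw [ha, ha]) (right_mem_Icc.2 hab.le))
    ⟨C, ?_⟩ ⟨-C, ?_⟩
  · obtain ⟨x, hx, heq⟩ := (hθ C).exists_sub_eq_mul hab
    have hslope : pruferRate (p x) (q x) (t x) (θ C x) - C * ρ x ≤ -(|z - y| / (b - a)) := by
      linarith [hC x hx (θ C x), le_abs_self (pruferRate (p x) (q x) (t x) (θ C x))]
    linarith [mul_le_mul_of_nonneg_right hslope hba.le, neg_abs_le (z - y), ha C]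
  · obtain ⟨x, hx, heq⟩ := (hθ (-C)).exists_sub_eq_mul hab
    have hslope : |z - y| / (b - a) ≤ pruferRate (p x) (q x) (t x) (θ (-C) x) - -C * ρ x := by
      linarith [hC x hx (θ (-C) x), neg_abs_le (pruferRate (p x) (q x) (t x) (θ (-C) x))]
    linarith [mul_le_mul_of_nonneg_right hslope hba.le, le_abs_self (z - y), ha (-C)]

lemma IsPruferPhase.bijective_apply_right {θ : ℝ → ℝ → ℝ} (hab : a < b)
    (hp : ContinuousOn p (Icc a b)) (hq : ContinuousOn q (Icc a b))
    (ht : ContinuousOn t (Icc a b)) (hρ : ContinuousOn ρ (Icc a b))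
    (hρpos : ∀ x ∈ Icc a b, 0 < ρ x) (hθ : ∀ lam, IsPruferPhase a b p q t ρ lam (θ lam))
    {y : ℝ} (ha : ∀ lam, θ lam a = y) : Bijective fun lam => θ lam b := by
  have hanti : StrictAnti fun lam => θ lam b := fun lam mu hlt =>
    (hθ lam).lt_right_of_lt hab hρpos (hθ mu) hlt (by rw [ha, ha])
  exact ⟨hanti.injective, surjective_apply_right hab hp hq ht hρ hρpos hθ ha⟩

end PruferPhase

section DiracSystem

variable {a b : ℝ} {p q t ρ : ℝ → ℝ} {lam : ℝ}

lemma IsPruferPhase.exists_satisfiesDiracSystem {θ : ℝ → ℝ} (hab : a ≤ b)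
    (hp : ContinuousOn p (Icc a b)) (hq : ContinuousOn q (Icc a b))
    (ht : ContinuousOn t (Icc a b)) (hρ : ContinuousOn ρ (Icc a b))
    (hθ : IsPruferPhase a b p q t ρ lam θ) :
    ∃ r : ℝ → ℝ, r a = 1 ∧ (∀ x, 0 < r x) ∧ SatisfiesDiracSystem a b p q t ρ lam
      (fun x => r x * Real.cos (θ x)) (fun x => r x * Real.sin (θ x)) := by
  have hθc : ContinuousOn θ (Icc a b) := HasDerivWithinAt.continuousOn hθ
  obtain ⟨M, hM⟩ := exists_nnnorm_add_nnnorm_add_nnnorm_le hp hq ht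
  obtain ⟨R, hRa, hR⟩ := exists_hasDerivWithinAt_of_lipschitzWith_of_norm_le (K := 0) (L := M)
    (v := fun x _ => pruferGrowth (p x) (q x) (t x) (θ x)) hab
    (fun _ _ => LipschitzWith.const _) (fun _ => by unfold pruferGrowth; fun_prop)
    (fun x hx _ => (abs_pruferGrowth_le _ _ _ _).trans (hM x hx)) (0 : ℝ)
  have hRc : ContinuousOn R (Icc a b) := HasDerivWithinAt.continuousOn hR
  refine ⟨fun x => Real.exp (R x), by simp [hRa], fun x => Real.exp_pos _, _, _,
    fun x hx => (hR x hx).exp.fun_mul (hθ x hx).cos,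
    fun x hx => (hR x hx).exp.fun_mul (hθ x hx).sin, ?_, ?_, fun x _ => ?_, fun x _ => ?_⟩
  · unfold pruferGrowth pruferRate
    fun_prop
  · unfold pruferGrowth pruferRate
    fun_prop
  · linear_combination -Real.exp (R x) *
      pruferGrowth_mul_sin_add_pruferRate_mul_cos (p x) (q x) (t x) (θ x)
  · linear_combination Real.exp (R x) *
      pruferGrowth_mul_cos_sub_pruferRate_mul_sin (p x) (q x) (t x) (θ x)

lemma abs_mul_add_mul_le_mul_norm (c d y z : ℝ) :
    |c * y + d * z| ≤ (|c| + |d|) * ‖(y, z)‖ := by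
  calc |c * y + d * z| ≤ |c| * |y| + |d| * |z| := by
        rw [← abs_mul, ← abs_mul]
        exact abs_add_le _ _
    _ ≤ |c| * ‖(y, z)‖ + |d| * ‖(y, z)‖ := by
        gcongr
        · exact norm_fst_le (y, z)
        · exact norm_snd_le (y, z)
    _ = (|c| + |d|) * ‖(y, z)‖ := (add_mul _ _ _).symm

namespace SatisfiesDiracSystem

variable {f g u v : ℝ → ℝ}

lemma sub_const_mul (h : SatisfiesDiracSystem a b p q t ρ lam f g)
    (h' : SatisfiesDiracSystem a b p q t ρ lam u v) (c : ℝ) :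
    SatisfiesDiracSystem a b p q t ρ lam (fun x => f x - c * u x) (fun x => g x - c * v x) := by
  obtain ⟨f', g', hf, hg, hf'c, hg'c, hfg, hgf⟩ := h
  obtain ⟨u', v', hu, hv, hu'c, hv'c, huv, hvu⟩ := h'
  refine ⟨_, _, fun x hx => (hf x hx).fun_sub ((hu x hx).const_mul c),
    fun x hx => (hg x hx).fun_sub ((hv x hx).const_mul c), by fun_prop, by fun_prop,
    fun x hx => ?_, fun x hx => ?_⟩
  · linear_combination hfg x hx - c * huv x hx
  · linear_combination hgf x hx - c * hvu x hx

lemma eq_zero_of_left_eq_zero (hp : ContinuousOn p (Icc a b)) (hq : ContinuousOn q (Icc a b))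
    (ht : ContinuousOn t (Icc a b)) (hρ : ContinuousOn ρ (Icc a b))
    (h : SatisfiesDiracSystem a b p q t ρ lam f g) (hfa : f a = 0) (hga : g a = 0) :
    ∀ x ∈ Icc a b, f x = 0 ∧ g x = 0 := by
  obtain ⟨f', g', hf, hg, -, -, hfg, hgf⟩ := h
  obtain ⟨M, hM⟩ := exists_nnnorm_add_nnnorm_add_nnnorm_le
    (p := fun x => p x - lam * ρ x) (q := fun x => q x - lam * ρ x) (by fun_prop) (by fun_prop) ht
  have hpair : ∀ x ∈ Icc a b,
      HasDerivWithinAt (fun x => (f x, g x)) (f' x, g' x) (Icc a b) x :=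
    fun x hx => (hf x hx).prodMk (hg x hx)
  have hbound : ∀ x ∈ Icc a b, ‖(f' x, g' x)‖ ≤ M * ‖(f x, g x)‖ := by
    intro x hx
    have hMx : |p x - lam * ρ x| + |q x - lam * ρ x| + |t x| ≤ M := hM x hx
    have hf' : f' x = -t x * f x + -(q x - lam * ρ x) * g x := by
      linear_combination hgf x hx
    have hg' : g' x = (p x - lam * ρ x) * f x + t x * g x := by
      linear_combination -hfg x hx
    refine norm_prod_le_iff.2 ⟨?_, ?_⟩
    · refine (hf' ▸ abs_mul_add_mul_le_mul_norm _ _ _ _).trans ?_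
      rw [abs_neg, abs_neg]
      gcongr
      linarith [abs_nonneg (p x - lam * ρ x)]
    · refine (hg' ▸ abs_mul_add_mul_le_mul_norm _ _ _ _).trans ?_
      gcongr
      linarith [abs_nonneg (q x - lam * ρ x)]
  have hzero := eq_zero_of_abs_deriv_le_mul_abs_self_of_eq_zero_right
    (HasDerivWithinAt.continuousOn hpair)
    (fun x hx => hasDerivWithinAt_Ici_of_Icc hx (hpair x (Ico_subset_Icc_self hx)))
    (by simp [hfa, hga]) (fun x hx => hbound x (Ico_subset_Icc_self hx))
  exact fun x hx => Prod.mk_eq_zero.1 (hzero x hx)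

lemma isDiracEigenvalue_iff {α β : ℝ} (hab : a ≤ b) (hp : ContinuousOn p (Icc a b))
    (hq : ContinuousOn q (Icc a b)) (ht : ContinuousOn t (Icc a b))
    (hρ : ContinuousOn ρ (Icc a b)) (h : SatisfiesDiracSystem a b p q t ρ lam u v)
    (hua : u a = -Real.sin α) (hva : v a = Real.cos α) :
    IsDiracEigenvalue a b p q t ρ α β lam ↔ u b * Real.cos β + v b * Real.sin β = 0 := by
  have hcirc := Real.sin_sq_add_cos_sq α
  constructor
  · rintro ⟨f, g, hfg, ⟨x, hx, hne⟩, hleft, hright⟩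
    obtain ⟨c, hfa, hga⟩ : ∃ c, f a = c * u a ∧ g a = c * v a := by
      refine ⟨g a * Real.cos α - f a * Real.sin α, ?_, ?_⟩
      · rw [hua]
        linear_combination Real.cos α * hleft - f a * hcirc
      · rw [hva]
        linear_combination Real.sin α * hleft - g a * hcirc
    have hmul : ∀ x ∈ Icc a b, f x = c * u x ∧ g x = c * v x := by
      simpa only [sub_eq_zero] using (hfg.sub_const_mul h c).eq_zero_of_left_eq_zero hp hq ht hρ
        (sub_eq_zero.2 hfa) (sub_eq_zero.2 hga)
    have hc : c ≠ 0 := by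
      rintro rfl
      simp [hmul x hx] at hne
    obtain ⟨hfb, hgb⟩ := hmul b (right_mem_Icc.2 hab)
    refine (mul_eq_zero.1 ?_).resolve_left hc
    rw [← hright, hfb, hgb]
    ring
  · intro hright
    refine ⟨u, v, h, ⟨a, left_mem_Icc.2 hab, ?_⟩, ?_, hright⟩
    · by_contra! hzero
      rw [hua, hva, neg_eq_zero] at hzero
      simp [hzero] at hcirc
    · rw [hua, hva]
      ring

end SatisfiesDiracSystem

lemma IsPruferPhase.isDiracEigenvalue_iff {α β : ℝ} {θ : ℝ → ℝ} (hab : a ≤ b)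
    (hp : ContinuousOn p (Icc a b)) (hq : ContinuousOn q (Icc a b))
    (ht : ContinuousOn t (Icc a b)) (hρ : ContinuousOn ρ (Icc a b))
    (hθ : IsPruferPhase a b p q t ρ lam θ) (ha : θ a = α + Real.pi / 2) :
    IsDiracEigenvalue a b p q t ρ α β lam ↔ Real.cos (θ b - β) = 0 := by
  obtain ⟨r, hra, hr, hsol⟩ := hθ.exists_satisfiesDiracSystem hab hp hq ht hρ
  rw [hsol.isDiracEigenvalue_iff hab hp hq ht hρ (by simp [hra, ha, Real.cos_add_pi_div_two])
    (by simp [hra, ha, Real.sin_add_pi_div_two]), mul_assoc, mul_assoc, ← mul_add, ← Real.cos_sub]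
  exact mul_eq_zero_iff_left (hr b).ne'

end DiracSystem

lemma setOf_cos_sub_eq_zero_eq_range (β : ℝ) :
    {y : ℝ | Real.cos (y - β) = 0} = range fun k : ℤ => β + (2 * k + 1) * Real.pi / 2 := by
  ext y
  simp only [mem_ofPred_eq, Real.cos_eq_zero_iff, sub_eq_iff_eq_add', mem_range, @eq_comm _ y]

lemma infinite_setOf_cos_sub_eq_zero (β : ℝ) : {y : ℝ | Real.cos (y - β) = 0}.Infinite := by
  rw [setOf_cos_sub_eq_zero_eq_range]
  refine infinite_range_of_injective fun j k hjk => ?_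
  simpa [Real.pi_ne_zero] using hjk

lemma countable_setOf_cos_sub_eq_zero (β : ℝ) : {y : ℝ | Real.cos (y - β) = 0}.Countable := by
  rw [setOf_cos_sub_eq_zero_eq_range]
  exact countable_range _

theorem dirac_eigenvalues_countably_infinite_general
    (a b : ℝ) (hab : a < b)
    (p q t ρ : ℝ → ℝ)
    (hp : ContinuousOn p (Icc a b)) (hq : ContinuousOn q (Icc a b))
    (ht : ContinuousOn t (Icc a b)) (hρ : ContinuousOn ρ (Icc a b))
    (hρpos : ∀ x ∈ Icc a b, 0 < ρ x) (α β : ℝ) :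
    {lam : ℝ | IsDiracEigenvalue a b p q t ρ α β lam}.Infinite ∧
    {lam : ℝ | IsDiracEigenvalue a b p q t ρ α β lam}.Countable := by
  choose θ hθa hθ using fun lam =>
    exists_isPruferPhase hab.le hp hq ht hρ lam (α + Real.pi / 2)
  have hbij : Bijective fun lam => θ lam b :=
    IsPruferPhase.bijective_apply_right hab hp hq ht hρ hρpos hθ hθa
  have hpreimage : {lam : ℝ | IsDiracEigenvalue a b p q t ρ α β lam} =
      (fun lam => θ lam b) ⁻¹' {y | Real.cos (y - β) = 0} :=
    ext fun lam => (hθ lam).isDiracEigenvalue_iff hab.le hp hq ht hρ (hθa lam)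
  rw [hpreimage]
  exact ⟨(infinite_setOf_cos_sub_eq_zero β).preimage (hbij.surjective.range_eq ▸ subset_univ _),
    (countable_setOf_cos_sub_eq_zero β).preimage hbij.injective⟩

/-- The set of eigenvalues of the Dirac-type boundary-value problem is countably
infinite. -/
theorem dirac_eigenvalues_countably_infinite
    (a b : ℝ) (hab : a < b)
    (p q t ρ : ℝ → ℝ)
    (hp : ContDiffOn ℝ 1 p (Set.Icc a b)) (hq : ContDiffOn ℝ 1 q (Set.Icc a b))
    (ht : ContDiffOn ℝ 1 t (Set.Icc a b)) (hρ : ContDiffOn ℝ 1 ρ (Set.Icc a b))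
    (hρpos : ∀ x ∈ Set.Icc a b, 0 < ρ x)
    (α β : ℝ) (hα : α ∈ Set.Ico 0 (2 * Real.pi)) (hβ : β ∈ Set.Ico 0 (2 * Real.pi)) :
    {lam : ℝ | IsDiracEigenvalue a b p q t ρ α β lam}.Infinite ∧
    {lam : ℝ | IsDiracEigenvalue a b p q t ρ α β lam}.Countable :=
  dirac_eigenvalues_countably_infinite_general a b hab p q t ρ hp.continuousOn hq.continuousOn
    ht.continuousOn hρ.continuousOn hρpos α β
end
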